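/- arXiv:1001.1576 — 3 statements merged into one kernel-verified Lean document; each statement's English description precedes it below -/
import Mathlib

section
/- Let 𝒜 be an attractor, let O₁, O₂ be open attractor neighborhoods of 𝒜, and for i = 1, 2 let Vᵢ ∈ C^∞(Oᵢ) be radially unbounded functions vanishing on 𝒜 satisfying max_{v ∈ F(x)} ∇Vᵢ(x)·v ≤ −wᵢ(x) on Oᵢ, with wᵢ ∈ C(Oᵢ) nonnegative, wᵢ = 0 on 𝒜 and wᵢ > 0 on Oᵢ ∖ 𝒜. Then for any compact set K ⊆ (O₁ ∩ O₂) ∖ 𝒜 there exists a smooth vector field Ψ ∈ C^∞(X, X) such that ∇Vᵢ(x)·Ψ(x) < 0 for all x ∈ K and i = 1, 2. -/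
open Set Filter Topology MeasureTheory Metric Pointwise

namespace DI

/-- The phase space `X = ℝ^m`. -/
abbrev X (m : ℕ) := EuclideanSpace ℝ (Fin m)

variable {m : ℕ}

/-- Standing assumptions (H1)–(H2): `F x` is a nonempty convex compact set for every `x`,
and `F` is upper semicontinuous (as a set-valued map). -/
def Standing (F : X m → Set (X m)) : Prop :=
  (∀ x, (F x).Nonempty ∧ Convex ℝ (F x) ∧ IsCompact (F x)) ∧
  (∀ x, ∀ ε > 0, ∃ δ > 0, ∀ y, dist y x < δ → F y ⊆ Metric.thickening ε (F x))

/-- `γ` is a solution of the differential inclusion `x' ∈ F x` on the set `I`: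
it is an indefinite integral (hence absolutely continuous on compact subintervals)
of an integrable selection `g` with `g u ∈ F (γ u)` for a.e. `u ∈ I`. -/
def IsSolOn (F : X m → Set (X m)) (γ : ℝ → X m) (I : Set ℝ) : Prop :=
  ∃ g : ℝ → X m,
    (∀ s ∈ I, ∀ t ∈ I, IntervalIntegrable g volume s t ∧ γ t = γ s + ∫ u in s..t, g u) ∧
    (∀ᵐ u ∂(volume.restrict I), g u ∈ F (γ u))

/-- The reachable set `ℛ(t)x` of the inclusion `x' ∈ F x`. -/
def reach (F : X m → Set (X m)) (t : ℝ) (x : X m) : Set (X m) :=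
  {y | ∃ γ : ℝ → X m, IsSolOn F γ (Icc 0 t) ∧ γ 0 = x ∧ γ t = y}

/-- `ℛ(t)A`. -/
def reachSet (F : X m → Set (X m)) (t : ℝ) (A : Set (X m)) : Set (X m) :=
  ⋃ x ∈ A, reach F t x

/-- No solution starting in `B` blows up on `[0,T]`: every solution on a subinterval
`[0,s] ⊆ [0,T]` starting in `B` extends to a solution on `[0,T]`. -/
def NoBlowupUpTo (F : X m → Set (X m)) (B : Set (X m)) (T : ℝ) : Prop :=
  ∀ s ∈ Icc (0:ℝ) T, ∀ γ : ℝ → X m, IsSolOn F γ (Icc 0 s) → γ 0 ∈ B →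
    ∃ γ' : ℝ → X m, IsSolOn F γ' (Icc 0 T) ∧ EqOn γ' γ (Icc 0 s)

/-- No solution starting in `B` blows up in finite time. -/
def NoBlowup (F : X m → Set (X m)) (B : Set (X m)) : Prop :=
  ∀ T > 0, NoBlowupUpTo F B T

/-- `A` attracts `B` (in the strong sense): no solution from `B` blows up in finite
time and `d_H(ℛ(t)B, A) → 0` as `t → ∞`. -/
def Attracts (F : X m → Set (X m)) (A B : Set (X m)) : Prop :=
  NoBlowup F B ∧
  ∀ ε > 0, ∃ T : ℝ, ∀ t ≥ T, ∀ y ∈ reachSet F t B, Metric.infDist y A < ε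

/-- The attraction basin `Ω(A)`. -/
def basin (F : X m → Set (X m)) (A : Set (X m)) : Set (X m) :=
  {x | Attracts F A {x}}

/-- `A` is positively invariant. -/
def PosInvariant (F : X m → Set (X m)) (A : Set (X m)) : Prop :=
  ∀ t ≥ (0:ℝ), reachSet F t A ⊆ A

/-- `A` is invariant. -/
def Invariant (F : X m → Set (X m)) (A : Set (X m)) : Prop :=
  ∀ t ≥ (0:ℝ), reachSet F t A = A

/-- The ω-limit set `ω(A)`. -/
def omegaLim (F : X m → Set (X m)) (A : Set (X m)) : Set (X m) :=
  {y | ∃ (t : ℕ → ℝ) (p : ℕ → X m), Tendsto t atTop atTop ∧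
    (∀ n, p n ∈ reachSet F (t n) A) ∧ Tendsto p atTop (𝓝 y)}

/-- `𝒜` is an attractor: a compact set admitting a neighborhood `U` with `ω(U) = 𝒜`. -/
def IsAttractor (F : X m → Set (X m)) (𝒜 : Set (X m)) : Prop :=
  IsCompact 𝒜 ∧ ∃ U : Set (X m), 𝒜 ⊆ interior U ∧ omegaLim F U = 𝒜

/-- `O` is an attractor neighborhood of `𝒜`: a positively invariant neighborhood of `𝒜`
contained in the attraction basin `Ω(𝒜)`. -/
def IsAttractorNbhd (F : X m → Set (X m)) (𝒜 O : Set (X m)) : Prop :=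
  𝒜 ⊆ interior O ∧ PosInvariant F O ∧ O ⊆ basin F 𝒜

/-- The attraction basin of `A` in `U`: `Ω^U(A) = Ω(A) ∩ {x ∈ U : ℛ(t)x ⊆ U ∀ t ≥ 0}`. -/
def basinIn (F : X m → Set (X m)) (U A : Set (X m)) : Set (X m) :=
  basin F A ∩ {x ∈ U | ∀ t ≥ (0:ℝ), reach F t x ⊆ U}

/-- The right-hand side of the inflated inclusion:
`clconv F(x + δ B̄₁) + δ B̄₁`. -/
def inflate (F : X m → Set (X m)) (δ : ℝ) (x : X m) : Set (X m) :=
  closure (convexHull ℝ (⋃ y ∈ Metric.closedBall x δ, F y)) +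
    Metric.closedBall (0 : X m) δ

/-- `S` is weakly invariant: through every point of `S` passes a complete
solution contained in `S`. -/
def WeaklyInvariant (F : X m → Set (X m)) (S : Set (X m)) : Prop :=
  ∀ x ∈ S, ∃ γ : ℝ → X m, IsSolOn F γ univ ∧ γ 0 = x ∧ range γ ⊆ S

/-- `A` is an attractor in `𝒜`: compact, `A ⊆ 𝒜`, and `ω(U ∩ 𝒜) = A` for some
neighborhood `U` of `A`. -/
def IsAttractorIn (F : X m → Set (X m)) (𝒜 A : Set (X m)) : Prop :=
  IsCompact A ∧ A ⊆ 𝒜 ∧ ∃ U : Set (X m), A ⊆ interior U ∧ omegaLim F (U ∩ 𝒜) = A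

/-- The dual repeller `A* = {x ∈ 𝒜 : ω(x) ∖ A ≠ ∅}` of `A` in `𝒜`. -/
def dualRepeller (F : X m → Set (X m)) (𝒜 A : Set (X m)) : Set (X m) :=
  {x ∈ 𝒜 | (omegaLim F {x} \ A).Nonempty}

/-- The ω-limit set of a complete solution. -/
def omegaOf (γ : ℝ → X m) : Set (X m) :=
  {y | ∃ t : ℕ → ℝ, Tendsto t atTop atTop ∧ Tendsto (fun n => γ (t n)) atTop (𝓝 y)}

/-- The α-limit set of a complete solution. -/
def alphaOf (γ : ℝ → X m) : Set (X m) :=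
  {y | ∃ t : ℕ → ℝ, Tendsto t atTop atBot ∧ Tendsto (fun n => γ (t n)) atTop (𝓝 y)}

/-- The unstable set `W^u(S)` (within `𝒜`). -/
def unstableSet (F : X m → Set (X m)) (𝒜 S : Set (X m)) : Set (X m) :=
  {x | ∃ γ : ℝ → X m, IsSolOn F γ univ ∧ range γ ⊆ 𝒜 ∧ γ 0 = x ∧ alphaOf γ ⊆ S}

/-- `A 0 ⊆ A 1 ⊆ ⋯ ⊆ A l` is a Morse filtration of the attractor `𝒜`. -/
def IsMorseFiltration (F : X m → Set (X m)) (𝒜 : Set (X m)) (l : ℕ)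
    (A : ℕ → Set (X m)) : Prop :=
  A 0 = ∅ ∧ A l = 𝒜 ∧ (∀ k < l, A k ⊆ A (k+1)) ∧ ∀ k ≤ l, IsAttractorIn F 𝒜 (A k)

/-- `M 1, …, M l` is a Morse decomposition of the attractor `𝒜`. -/
def IsMorseDecomposition (F : X m → Set (X m)) (𝒜 : Set (X m)) (l : ℕ)
    (M : ℕ → Set (X m)) : Prop :=
  (∀ k, 1 ≤ k → k ≤ l → IsCompact (M k) ∧ M k ⊆ 𝒜) ∧
  ∃ A : ℕ → Set (X m), IsMorseFiltration F 𝒜 l A ∧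
    ∀ k, 1 ≤ k → k ≤ l → M k = A k ∩ dualRepeller F 𝒜 (A (k-1))

/-- `V` is radially unbounded (class `𝒦∞`) on the open set `U`. -/
def RadiallyUnbounded (U : Set (X m)) (V : X m → ℝ) : Prop :=
  ∀ R > (0:ℝ), ∃ K : Set (X m), K ⊆ U ∧ IsCompact K ∧ ∀ x ∈ U \ K, V x > R

/-- `V` is locally Lipschitz on `O`. -/
def LocallyLipschitzOn (O : Set (X m)) (V : X m → ℝ) : Prop :=
  ∀ x ∈ O, ∃ ε > (0:ℝ), ∃ L : NNReal, LipschitzOnWith L V (Metric.ball x ε ∩ O)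

/-- The set-valued map `F` is locally Lipschitz:
`F x ⊆ F y + L‖x - y‖ B̄₁` on compact sets. -/
def LocallyLipschitzMap (F : X m → Set (X m)) : Prop :=
  ∀ K : Set (X m), IsCompact K → ∃ L > (0:ℝ), ∀ x ∈ K, ∀ y ∈ K,
    F x ⊆ F y + Metric.closedBall (0 : X m) (L * ‖x - y‖)

/-- The Dini supderivative `D⁺_v V(x) = limsup_{τ→0⁺} (V(x+τv) - V x)/τ`. -/
noncomputable def diniSup (V : X m → ℝ) (x v : X m) : ℝ :=
  limsup (fun τ : ℝ => (V (x + τ • v) - V x) / τ) (𝓝[>] 0)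

/-- `A` is a strong deformation retract of `Y`. -/
def IsSDR (A Y : Set (X m)) : Prop :=
  A ⊆ Y ∧ ∃ H : ℝ × X m → X m, ContinuousOn H (Icc (0:ℝ) 1 ×ˢ Y) ∧
    (∀ σ ∈ Icc (0:ℝ) 1, ∀ y ∈ Y, H (σ, y) ∈ Y) ∧
    (∀ y ∈ Y, H (0, y) = y) ∧ (∀ y ∈ Y, H (1, y) ∈ A) ∧
    (∀ σ ∈ Icc (0:ℝ) 1, ∀ a ∈ A, H (σ, a) = a)

/-- `V` is a Morse–Lyapunov function of the Morse decomposition `M` of `𝒜` on the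
attraction basin `Ω(𝒜)`: continuous, constant on each Morse set, and strictly
decreasing along solutions lying in `Ω(𝒜) ∖ 𝒟`, where `𝒟 = ⋃ₖ M k`. -/
def IsMLFunction (F : X m → Set (X m)) (𝒜 : Set (X m)) (l : ℕ) (M : ℕ → Set (X m))
    (V : X m → ℝ) : Prop :=
  ContinuousOn V (basin F 𝒜) ∧
  (∀ k, 1 ≤ k → k ≤ l → ∃ c : ℝ, ∀ x ∈ M k, V x = c) ∧
  (∀ a b : ℝ, ∀ γ : ℝ → X m, IsSolOn F γ (Icc a b) →
    (∀ t ∈ Icc a b, γ t ∈ basin F 𝒜 \ ⋃ k ∈ Icc 1 l, M k) →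
    StrictAntiOn (fun t => V (γ t)) (Icc a b))

/-- A strict Morse–Lyapunov function: in addition `V(M i) < V(M j)` whenever
`i < j` and both Morse sets are nonempty. -/
def IsStrictML (F : X m → Set (X m)) (𝒜 : Set (X m)) (l : ℕ) (M : ℕ → Set (X m))
    (V : X m → ℝ) : Prop :=
  IsMLFunction F 𝒜 l M V ∧
  ∀ i j, 1 ≤ i → i < j → j ≤ l → ∀ x ∈ M i, ∀ y ∈ M j, V x < V y



/-- Lemma 5.1: given two smooth radially unbounded Lyapunov
functions `V₁, V₂` of `𝒜` on open attractor neighborhoods `O₁, O₂`, for any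
compact `K ⊆ (O₁ ∩ O₂) ∖ 𝒜` there is a smooth vector field `Ψ` with
`∇Vᵢ(x)·Ψ(x) < 0` on `K` for `i = 1, 2`. -/
theorem common_descent_vector_field {m : ℕ} (F : X m → Set (X m)) (hF : Standing F)
    (𝒜 : Set (X m)) (h𝒜 : IsAttractor F 𝒜)
    (O₁ O₂ : Set (X m)) (hO₁o : IsOpen O₁) (hO₂o : IsOpen O₂)
    (hO₁ : IsAttractorNbhd F 𝒜 O₁) (hO₂ : IsAttractorNbhd F 𝒜 O₂)
    (V₁ V₂ w₁ w₂ : X m → ℝ)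
    (hV₁ : ContDiffOn ℝ (⊤ : ℕ∞) V₁ O₁) (hV₂ : ContDiffOn ℝ (⊤ : ℕ∞) V₂ O₂)
    (hru₁ : RadiallyUnbounded O₁ V₁) (hru₂ : RadiallyUnbounded O₂ V₂)
    (hV₁0 : ∀ x ∈ 𝒜, V₁ x = 0) (hV₂0 : ∀ x ∈ 𝒜, V₂ x = 0)
    (hw₁c : ContinuousOn w₁ O₁) (hw₂c : ContinuousOn w₂ O₂)
    (hw₁n : ∀ x ∈ O₁, 0 ≤ w₁ x) (hw₂n : ∀ x ∈ O₂, 0 ≤ w₂ x)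
    (hw₁a : ∀ x ∈ 𝒜, w₁ x = 0) (hw₂a : ∀ x ∈ 𝒜, w₂ x = 0)
    (hw₁p : ∀ x ∈ O₁ \ 𝒜, 0 < w₁ x) (hw₂p : ∀ x ∈ O₂ \ 𝒜, 0 < w₂ x)
    (hd₁ : ∀ x ∈ O₁, ∀ v ∈ F x, fderiv ℝ V₁ x v ≤ -w₁ x)
    (hd₂ : ∀ x ∈ O₂, ∀ v ∈ F x, fderiv ℝ V₂ x v ≤ -w₂ x)
    (K : Set (X m)) (hK : IsCompact K) (hKsub : K ⊆ (O₁ ∩ O₂) \ 𝒜) :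
    ∃ Ψ : X m → X m, ContDiff ℝ (⊤ : ℕ∞) Ψ ∧
      ∀ x ∈ K, fderiv ℝ V₁ x (Ψ x) < 0 ∧ fderiv ℝ V₂ x (Ψ x) < 0 := by
  have key : ∀ (O : Set (X m)) (V w : X m → ℝ), IsOpen O → ContDiffOn ℝ (⊤ : ℕ∞) V O →
      (∀ x ∈ O \ 𝒜, 0 < w x) → (∀ x ∈ O, ∀ v ∈ F x, fderiv ℝ V x v ≤ -w x) →
      ∀ x ∈ O \ 𝒜, ∀ v ∈ F x, ∀ᶠ y in 𝓝 x, fderiv ℝ V y v < 0 := by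
    intro O V w hO hV hw hd x hx v hv
    have hc : ContinuousOn (fun y => fderiv ℝ V y) O :=
      hV.continuousOn_fderiv_of_isOpen hO (by exact_mod_cast le_top)
    have hc' : ContinuousAt (fun y => fderiv ℝ V y v) x :=
      (hc.continuousAt (hO.mem_nhds hx.1)).clm_apply continuousAt_const
    have h1 := hd x hx.1 v hv
    have h2 := hw x hx
    exact hc'.eventually_lt continuousAt_const (by linarith)
  let t : X m → Set (X m) := fun x =>
    {v | x ∈ K → fderiv ℝ V₁ x v < 0 ∧ fderiv ℝ V₂ x v < 0}
  have ht : ∀ x, Convex ℝ (t x) := by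
    intro x
    by_cases hx : x ∈ K
    · have h1 : Convex ℝ {v : X m | fderiv ℝ V₁ x v < 0} :=
        convex_halfSpace_lt (fderiv ℝ V₁ x).toLinearMap.isLinear 0
      have h2 : Convex ℝ {v : X m | fderiv ℝ V₂ x v < 0} :=
        convex_halfSpace_lt (fderiv ℝ V₂ x).toLinearMap.isLinear 0
      have h3 : t x = {v : X m | fderiv ℝ V₁ x v < 0} ∩ {v : X m | fderiv ℝ V₂ x v < 0} := by
        ext v; simp [t, hx]
      rw [h3]; exact h1.inter h2
    · have h3 : t x = univ := by
        ext v; simp [t, hx]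
      rw [h3]; exact convex_univ
  have Hloc : ∀ x : X m, ∃ c : X m, ∀ᶠ y in 𝓝 x, c ∈ t y := by
    intro x
    by_cases hx : x ∈ K
    · obtain ⟨v, hv⟩ := (hF.1 x).1
      have hx' := hKsub hx
      refine ⟨v, ?_⟩
      filter_upwards [key O₁ V₁ w₁ hO₁o hV₁ hw₁p hd₁ x ⟨hx'.1.1, hx'.2⟩ v hv,
        key O₂ V₂ w₂ hO₂o hV₂ hw₂p hd₂ x ⟨hx'.1.2, hx'.2⟩ v hv] with y h1 h2 _
      exact ⟨h1, h2⟩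
    · refine ⟨0, ?_⟩
      filter_upwards [hK.isClosed.isOpen_compl.mem_nhds hx] with y hy hy'
      exact absurd hy' hy
  obtain ⟨g, hg⟩ := exists_contMDiffMap_forall_mem_convex_of_local_const
    (n := (⊤ : ℕ∞)) (modelWithCornersSelf ℝ (X m)) ht Hloc
  exact ⟨g, g.contMDiff.contDiff, fun x hx => hg x hx⟩

end DI
end

section
/- Let 𝒜 be an attractor, W an open attractor neighborhood of 𝒜, and let V ∈ C^∞(W) be a radially unbounded function vanishing on 𝒜 satisfying max_{v ∈ F(x)} ∇V(x)·v ≤ −w(x) for all x ∈ W, where w ∈ C(W) is nonnegative with w = 0 on 𝒜 and w > 0 on W ∖ 𝒜. Then for every ε > 0 the sublevel set V_ε = {x ∈ W : V(x) ≤ ε} is a strong deformation retract of W. -/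
open Set Filter Topology MeasureTheory Metric Pointwise

namespace DI

variable {m : ℕ}

section Helpers

variable {E : Type*} [NormedAddCommGroup E] [InnerProductSpace ℝ E] [FiniteDimensional ℝ E]

/-- Cut off a `C¹` vector field to a bounded, globally Lipschitz one. -/
lemma exists_cutoff_field {U C : Set E} (hU : IsOpen U) {G : E → E}
    (hG : ContDiffOn ℝ 1 G U) (hC : IsCompact C) (hCU : C ⊆ U) :
    ∃ (K M : NNReal) (f : E → E), LipschitzWith K f ∧ (∀ x, ‖f x‖ ≤ M) ∧ EqOn f G C := by
  obtain ⟨L, hL, hCL, hLU⟩ := exists_compact_between hC hU hCU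
  obtain ⟨χ, h0, h1, -⟩ := exists_contMDiffMap_zero_one_of_isClosed (n := 1)
    (modelWithCornersSelf ℝ E) (s := (interior L)ᶜ) (t := C)
    isOpen_interior.isClosed_compl hC.isClosed
    (disjoint_left.2 fun x hx hx' => hx (hCL hx'))
  have hχ : ContDiff ℝ 1 χ := χ.contMDiff.contDiff
  have hz : ∀ x ∉ L, χ x • G x = 0 := by
    intro x hx
    have : χ x = 0 := h0 (fun h => hx (interior_subset h))
    rw [this, zero_smul]
  have hf : ContDiff ℝ 1 (fun x => χ x • G x) := by
    rw [contDiff_iff_contDiffAt]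
    intro x
    by_cases hx : x ∈ U
    · exact hχ.contDiffAt.smul (hG.contDiffAt (hU.mem_nhds hx))
    · have hxL : x ∉ L := fun h => hx (hLU h)
      have : (fun x => χ x • G x) =ᶠ[𝓝 x] fun _ => 0 := by
        filter_upwards [hL.isClosed.isOpen_compl.mem_nhds hxL] with y hy
        exact hz y hy
      exact contDiffAt_const.congr_of_eventuallyEq this
  have hcs : HasCompactSupport (fun x => χ x • G x) := HasCompactSupport.intro hL hz
  obtain ⟨K, hK⟩ := ContDiff.lipschitzWith_of_hasCompactSupport hcs hf (by simp)
  obtain ⟨M, hM⟩ := hcs.exists_bound_of_continuous hf.continuous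
  refine ⟨K, ⟨max M 0, le_max_right _ _⟩, _, hK, fun x => (hM x).trans (le_max_left _ _), ?_⟩
  intro x hx
  have : χ x = 1 := h1 hx
  simp [this]

/-- The flow of a bounded Lipschitz field, on a ball and for a given time span. -/
lemma exists_flow {K M : NNReal} {f : E → E} (hf : LipschitzWith K f) (hM : ∀ x, ‖f x‖ ≤ M)
    (r T : NNReal) :
    ∃ φ : E × ℝ → E, (∀ x ∈ closedBall (0 : E) r, φ (x, 0) = x ∧
      ∀ t ∈ Icc (0 : ℝ) T, HasDerivWithinAt (fun s => φ (x, s)) (f (φ (x, t))) (Icc 0 T) t) ∧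
      ContinuousOn φ (closedBall (0 : E) r ×ˢ Icc (0 : ℝ) T) := by
  have h : IsPicardLindelof (fun _ => f) (tmin := 0) (tmax := T) ⟨0, left_mem_Icc.2 T.2⟩
      (0 : E) (M * T + r) r M K :=
    { lipschitzOnWith := fun _ _ => hf.lipschitzOnWith
      continuousOn := fun _ _ => continuousOn_const
      norm_le := fun _ _ x _ => hM x
      mul_max_le := by simp }
  exact h.exists_forall_mem_closedBall_eq_hasDerivWithinAt_continuousOn

lemma curve_level {W : Set E} {V : E → ℝ} (hW : IsOpen W)
    (hVd : ∀ x ∈ W, DifferentiableAt ℝ V x)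
    {ε R : ℝ} (hD : IsCompact {x ∈ W | ε ≤ V x ∧ V x ≤ R})
    {f : E → E} {N : Set E} (hN : IsOpen N) (hNW : N ⊆ W)
    (hDN : {x ∈ W | ε ≤ V x ∧ V x ≤ R} ⊆ N) (hfN : ∀ x ∈ N, fderiv ℝ V x (f x) = -1)
    {φ : ℝ → E} {x : E} (hx : x ∈ W) (hxR : V x ≤ R) (hxε : ε ≤ V x) (h0 : φ 0 = x)
    (hφ : ∀ t ∈ Icc 0 (V x - ε), HasDerivWithinAt φ (f (φ t)) (Icc 0 (V x - ε)) t) :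
    ∀ t ∈ Icc 0 (V x - ε), φ t ∈ W ∧ V (φ t) = V x - t := by
  have hc : ContinuousOn φ (Icc 0 (V x - ε)) := fun t ht => (hφ t ht).continuousWithinAt
  have hVc : ContinuousOn V W := fun y hy => (hVd y hy).continuousAt.continuousWithinAt
  set D := {x ∈ W | ε ≤ V x ∧ V x ≤ R} with hDdef
  have hA : IsClosed (Icc 0 (V x - ε) ∩ φ ⁻¹' D) :=
    hc.preimage_isClosed_of_isClosed isClosed_Icc hD.isClosed
  have hcA : ContinuousOn (fun t => V (φ t) + t) (Icc 0 (V x - ε) ∩ φ ⁻¹' D) := by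
    refine ContinuousOn.add ?_ continuousOn_id
    exact hVc.comp (hc.mono inter_subset_left) fun t ht => ht.2.1
  have hB := hcA.preimage_isClosed_of_isClosed hA (isClosed_singleton (x := V x))
  have hS : IsClosed ({t | φ t ∈ W ∧ V (φ t) = V x - t} ∩ Icc 0 (V x - ε)) := by
    convert hB using 1
    ext t
    simp only [hDdef, mem_inter_iff, mem_ofPred_eq, mem_preimage, mem_singleton_iff, mem_Icc]
    constructor
    · rintro ⟨⟨h1, h2⟩, h3, h4⟩
      refine ⟨⟨⟨h3, h4⟩, h1, ?_, ?_⟩, ?_⟩ <;> linarith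
    · rintro ⟨⟨⟨h3, h4⟩, h1, -, -⟩, h5⟩
      exact ⟨⟨h1, by linarith⟩, h3, h4⟩
  refine hS.Icc_subset_of_forall_mem_nhdsWithin ⟨by rwa [h0], by simp [h0]⟩ ?_
  rintro t ⟨⟨ht1, ht2⟩, ht3, ht4⟩
  have htN : φ t ∈ N := hDN ⟨ht1, by linarith, by linarith⟩
  have hev : ∀ᶠ s in 𝓝[≥] t, φ s ∈ N := by
    have : Tendsto φ (𝓝[≥] t) (𝓝 (φ t)) := by
      have h := hc t ⟨ht3, ht4.le⟩
      refine h.mono_left ?_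
      rw [nhdsWithin_le_iff]
      exact mem_of_superset (Icc_mem_nhdsGE ht4) (Icc_subset_Icc_left ht3)
    exact this (hN.mem_nhds htN)
  obtain ⟨u, hu, hu2⟩ := (mem_nhdsGE_iff_exists_Icc_subset).1
    (hev : {s | φ s ∈ N} ∈ 𝓝[≥] t)
  set b := min u (V x - ε) with hb
  have htb : t < b := lt_min hu ht4
  have hsub : Icc t b ⊆ Icc 0 (V x - ε) := fun s hs => ⟨ht3.trans hs.1, hs.2.trans (min_le_right _ _)⟩
  have hNb : ∀ s ∈ Icc t b, φ s ∈ N := fun s hs => hu2 ⟨hs.1, hs.2.trans (min_le_left _ _)⟩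
  have hconst : ∀ s ∈ Icc t b, V (φ s) + s = V (φ t) + t := by
    refine constant_of_has_deriv_right_zero (f := fun s => V (φ s) + s) ?_ ?_
    · refine ContinuousOn.add ?_ continuousOn_id
      exact hVc.comp (hc.mono hsub) fun s hs => hNW (hNb s hs)
    · intro s hs
      have hs' : s ∈ Icc t b := ⟨hs.1, hs.2.le⟩
      have h1 : HasDerivWithinAt φ (f (φ s)) (Ici s) s := by
        refine (hφ s (hsub hs')).mono_of_mem_nhdsWithin ?_
        exact mem_of_superset (Icc_mem_nhdsGE hs.2)
          ((Icc_subset_Icc_left hs.1).trans hsub)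
      have h2 := (hVd _ (hNW (hNb s hs'))).hasFDerivAt.comp_hasDerivWithinAt s h1
      rw [hfN _ (hNb s hs')] at h2
      have h3 := h2.add (hasDerivWithinAt_id s (Ici s))
      simpa using! h3
  filter_upwards [Icc_mem_nhdsGT htb] with s hs
  exact ⟨hNW (hNb s hs), by have := hconst s hs; linarith⟩

/-- Flow on a compact sublevel set. -/
lemma sublevel_flow {W : Set E} {V : E → ℝ} (hW : IsOpen W)
    (hVd : ∀ x ∈ W, DifferentiableAt ℝ V x)
    (hK : ∀ R, IsCompact {x ∈ W | V x ≤ R}) {G : E → E}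
    (hG : ContDiffOn ℝ 1 G {x ∈ W | 0 < V x})
    (hGV : ∀ x ∈ W, 0 < V x → fderiv ℝ V x (G x) = -1) {ε : ℝ} (hε : 0 < ε) (R : ℝ) :
    ∃ (K : NNReal) (f : E → E) (φ : E × ℝ → E), LipschitzWith K f ∧
      (∀ x ∈ W, ε ≤ V x → V x ≤ R → f x = G x) ∧
      ContinuousOn φ ({x ∈ W | V x ≤ R} ×ˢ Icc 0 (max (R - ε) 0)) ∧
      (∀ x ∈ W, V x ≤ R → φ (x, 0) = x) ∧
      (∀ x ∈ W, ε ≤ V x → V x ≤ R → ∀ t ∈ Icc 0 (V x - ε), 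
        φ (x, t) ∈ W ∧ V (φ (x, t)) = V x - t ∧
        HasDerivWithinAt (fun s => φ (x, s)) (f (φ (x, t))) (Icc 0 (V x - ε)) t) := by
  have hVc : ContinuousOn V W := fun y hy => (hVd y hy).continuousAt.continuousWithinAt
  have hcomp : ∀ a b, IsCompact {x ∈ W | a ≤ V x ∧ V x ≤ b} := by
    intro a b
    have h1 : ContinuousOn V {x ∈ W | V x ≤ b} := hVc.mono fun x hx => hx.1
    have := h1.preimage_isClosed_of_isClosed (hK b).isClosed (isClosed_Ici (a := a))
    refine (hK b).of_isClosed_subset ?_ (fun x hx => ⟨hx.1, hx.2.2⟩)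
    convert this using 1
    ext x
    simp only [mem_ofPred_eq, mem_inter_iff, mem_preimage, mem_Ici]
    tauto
  have hUo : IsOpen {x ∈ W | 0 < V x} := hVc.isOpen_inter_preimage hW isOpen_Ioi
  obtain ⟨K, M, f, hf, hM, hfG⟩ := exists_cutoff_field hUo hG (hcomp (ε / 2) (R + 1))
    (fun x hx => ⟨hx.1, by linarith [hx.2.1]⟩)
  obtain ⟨r, hr⟩ := (hK R).isBounded.subset_closedBall (0 : E)
  obtain ⟨φ, hφ, hφc⟩ := exists_flow hf hM r.toNNReal (R - ε).toNNReal
  have hr' : ∀ x ∈ W, V x ≤ R → x ∈ closedBall (0 : E) r.toNNReal := fun x hx hxR =>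
    closedBall_subset_closedBall (Real.le_coe_toNNReal r) (hr ⟨hx, hxR⟩)
  have hder : ∀ x ∈ W, ε ≤ V x → V x ≤ R → ∀ t ∈ Icc 0 (V x - ε),
      HasDerivWithinAt (fun s => φ (x, s)) (f (φ (x, t))) (Icc 0 (V x - ε)) t := by
    intro x hx h1 h2 t ht
    have hs : Icc 0 (V x - ε) ⊆ Icc (0 : ℝ) (R - ε).toNNReal :=
      Icc_subset_Icc_right (le_trans (by linarith) (Real.le_coe_toNNReal _))
    exact ((hφ x (hr' x hx h2)).2 t (hs ht)).mono hs
  refine ⟨K, f, φ, hf, fun x hx h1 h2 => hfG ⟨hx, by linarith, by linarith⟩, ?_,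
    fun x hx h => (hφ x (hr' x hx h)).1, ?_⟩
  · refine hφc.mono (prod_mono (fun x hx => hr' x hx.1 hx.2) ?_)
    rw [Real.coe_toNNReal']
  · intro x hx h1 h2 t ht
    have hN : IsOpen {x ∈ W | V x ∈ Ioo (ε / 2) (R + 1)} :=
      hVc.isOpen_inter_preimage hW isOpen_Ioo
    have := curve_level hW hVd (hcomp ε R) hN (fun x hx => hx.1)
      (fun x hx => ⟨hx.1, by linarith [hx.2.1], by linarith [hx.2.2]⟩)
      (f := f) (fun x hx => by
        rw [hfG ⟨hx.1, hx.2.1.le, hx.2.2.le⟩]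
        exact hGV x hx.1 (by linarith [hx.2.1])) hx h2 h1
      (hφ x (hr' x hx h2)).1 (hder x hx h1 h2) t ht
    exact ⟨this.1, this.2, hder x hx h1 h2 t ht⟩

/-- The deformation. -/
lemma exists_deformation {W : Set E} {V : E → ℝ} (hW : IsOpen W)
    (hVd : ∀ x ∈ W, DifferentiableAt ℝ V x)
    (hK : ∀ R, IsCompact {x ∈ W | V x ≤ R}) {G : E → E}
    (hG : ContDiffOn ℝ 1 G {x ∈ W | 0 < V x})
    (hGV : ∀ x ∈ W, 0 < V x → fderiv ℝ V x (G x) = -1) {ε : ℝ} (hε : 0 < ε) :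
    ∃ H : ℝ × E → E, ContinuousOn H (Icc (0:ℝ) 1 ×ˢ W) ∧
      (∀ σ ∈ Icc (0:ℝ) 1, ∀ y ∈ W, H (σ, y) ∈ W) ∧
      (∀ y ∈ W, H (0, y) = y) ∧ (∀ y ∈ W, H (1, y) ∈ {x ∈ W | V x ≤ ε}) ∧
      (∀ σ ∈ Icc (0:ℝ) 1, ∀ a ∈ {x ∈ W | V x ≤ ε}, H (σ, a) = a) := by
  have hVc : ContinuousOn V W := fun y hy => (hVd y hy).continuousAt.continuousWithinAt
  choose K f φ hf hfG hφc hφ0 hφ using fun n : ℕ =>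
    sublevel_flow hW hVd hK hG hGV hε (n : ℝ)
  have huniq : ∀ n k : ℕ, n ≤ k → ∀ x ∈ W, ε ≤ V x → V x ≤ n → ∀ t ∈ Icc 0 (V x - ε),
      φ n (x, t) = φ k (x, t) := by
    intro n k hnk x hx h1 h2
    have hnk' : (n : ℝ) ≤ k := by exact_mod_cast hnk
    have h3 := h2.trans hnk'
    have hs : ∀ t ∈ Ico 0 (V x - ε), Icc 0 (V x - ε) ∈ 𝓝[≥] t := fun t ht =>
      mem_of_superset (Icc_mem_nhdsGE ht.2) (Icc_subset_Icc_left ht.1)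
    refine ODE_solution_unique (v := fun _ => f k) (fun _ => hf k)
      (f := fun t => φ n (x, t)) (g := fun t => φ k (x, t))
      (fun t ht => (hφ n x hx h1 h2 t ht).2.2.continuousWithinAt) ?_
      (fun t ht => (hφ k x hx h1 h3 t ht).2.2.continuousWithinAt) ?_ ?_
    · intro t ht
      obtain ⟨a1, a2, a3⟩ := hφ n x hx h1 h2 t ⟨ht.1, ht.2.le⟩
      have b1 : ε ≤ V (φ n (x, t)) := by linarith [ht.2]
      have b2 : V (φ n (x, t)) ≤ n := by linarith [ht.1]
      have : f n (φ n (x, t)) = f k (φ n (x, t)) := by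
        rw [hfG n _ a1 b1 b2, hfG k _ a1 b1 (b2.trans hnk')]
      rw [this] at a3
      exact a3.mono_of_mem_nhdsWithin (hs t ht)
    · intro t ht
      exact (hφ k x hx h1 h3 t ⟨ht.1, ht.2.le⟩).2.2.mono_of_mem_nhdsWithin (hs t ht)
    · rw [hφ0 n x hx h2, hφ0 k x hx h3]
  have hτ : ∀ σ ∈ Icc (0:ℝ) 1, ∀ x, ε ≤ V x → σ * max (V x - ε) 0 ∈ Icc 0 (V x - ε) := by
    intro σ hσ x h
    rw [max_eq_left (by linarith)]
    exact ⟨mul_nonneg hσ.1 (by linarith), mul_le_of_le_one_left (by linarith) hσ.2⟩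
  set H : ℝ × E → E := fun p => φ ⌈V p.2⌉₊ (p.2, p.1 * max (V p.2 - ε) 0) with hH
  have hHn : ∀ n : ℕ, ∀ σ ∈ Icc (0:ℝ) 1, ∀ x ∈ W, V x ≤ n →
      H (σ, x) = φ n (x, σ * max (V x - ε) 0) := by
    intro n σ hσ x hx hn
    by_cases h : ε ≤ V x
    · exact huniq _ n (Nat.ceil_le.2 hn) x hx h (Nat.le_ceil _) _ (hτ σ hσ x h)
    · simp only [hH]
      rw [max_eq_right (by linarith), mul_zero, hφ0 _ x hx (Nat.le_ceil _), hφ0 n x hx hn]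
  have hfix : ∀ σ ∈ Icc (0:ℝ) 1, ∀ a ∈ {x ∈ W | V x ≤ ε}, H (σ, a) = a := by
    intro σ hσ a ha
    simp only [hH]
    rw [max_eq_right (by linarith [ha.2]), mul_zero, hφ0 _ a ha.1 (Nat.le_ceil _)]
  refine ⟨H, ?_, ?_, ?_, ?_, hfix⟩
  · rintro ⟨σ, x⟩ ⟨hσ, hx⟩
    simp only at hσ hx
    obtain ⟨n, hn⟩ := exists_nat_gt (V x)
    have hO : IsOpen {y ∈ W | V y < n} := hVc.isOpen_inter_preimage hW isOpen_Iio
    have hcont : ContinuousOn H (Icc (0:ℝ) 1 ×ˢ {y ∈ W | V y < n}) := by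
      have : ContinuousOn (fun p : ℝ × E => φ n (p.2, p.1 * max (V p.2 - ε) 0))
          (Icc (0:ℝ) 1 ×ˢ {y ∈ W | V y < n}) := by
        refine (hφc n).comp ?_ ?_
        · have hV2 : ContinuousOn (fun p : ℝ × E => V p.2)
              (Icc (0:ℝ) 1 ×ˢ {y ∈ W | V y < n}) :=
            hVc.comp continuousOn_snd fun p hp => hp.2.1
          exact continuousOn_snd.prodMk (continuousOn_fst.mul
            ((hV2.sub continuousOn_const).sup continuousOn_const))
        · rintro ⟨s, y⟩ ⟨hs, hy⟩
          refine ⟨⟨hy.1, hy.2.le⟩, mul_nonneg hs.1 (le_max_right _ _), ?_⟩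
          refine (mul_le_of_le_one_left (le_max_right _ _) hs.2).trans ?_
          exact max_le_max_right _ (by linarith [hy.2])
      refine this.congr ?_
      rintro ⟨s, y⟩ ⟨hs, hy⟩
      exact hHn n s hs y hy.1 hy.2.le
    refine (hcont (σ, x) ⟨hσ, hx, hn⟩).mono_of_mem_nhdsWithin ?_
    rw [nhdsWithin_prod_eq]
    exact prod_mem_prod self_mem_nhdsWithin (mem_nhdsWithin_of_mem_nhds (hO.mem_nhds ⟨hx, hn⟩))
  · intro σ hσ y hy
    by_cases h : ε ≤ V y
    · exact (hφ _ y hy h (Nat.le_ceil _) _ (hτ σ hσ y h)).1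
    · rw [hfix σ hσ y ⟨hy, by linarith⟩]; exact hy
  · intro y hy
    simp only [hH]
    rw [zero_mul, hφ0 _ y hy (Nat.le_ceil _)]
  · intro y hy
    by_cases h : ε ≤ V y
    · have := hφ _ y hy h (Nat.le_ceil _) _ (hτ 1 ⟨zero_le_one, le_rfl⟩ y h)
      refine ⟨this.1, ?_⟩
      simp only [hH]
      rw [this.2.1, one_mul, max_eq_left (by linarith)]
      linarith
    · rw [hfix 1 ⟨zero_le_one, le_rfl⟩ y ⟨hy, by linarith⟩]; exact ⟨hy, by linarith⟩

end Helpers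

/-- from the proof of Proposition 5.2: the sublevel set
`V_ε = {x ∈ W : V x ≤ ε}` of a smooth radially unbounded Lyapunov function of `𝒜`
on `W` is a strong deformation retract of `W`, for every `ε > 0`. -/
theorem sublevel_is_deformation_retract {m : ℕ} (F : X m → Set (X m))
    (hF : Standing F) (𝒜 : Set (X m)) (h𝒜 : IsAttractor F 𝒜)
    (W : Set (X m)) (hWo : IsOpen W) (hW : IsAttractorNbhd F 𝒜 W)
    (V w : X m → ℝ)
    (hV : ContDiffOn ℝ (⊤ : ℕ∞) V W) (hru : RadiallyUnbounded W V)
    (hV0 : ∀ x ∈ 𝒜, V x = 0)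
    (hwc : ContinuousOn w W) (hwn : ∀ x ∈ W, 0 ≤ w x) (hwa : ∀ x ∈ 𝒜, w x = 0)
    (hwp : ∀ x ∈ W \ 𝒜, 0 < w x)
    (hd : ∀ x ∈ W, ∀ v ∈ F x, fderiv ℝ V x v ≤ -w x) :
    ∀ ε > (0:ℝ), IsSDR {x ∈ W | V x ≤ ε} W := by
  intro ε hε
  refine ⟨fun x hx => hx.1, ?_⟩
  have hVat : ∀ x ∈ W, ContDiffAt ℝ (⊤ : ℕ∞) V x := fun x hx => hV.contDiffAt (hWo.mem_nhds hx)
  have hVd : ∀ x ∈ W, DifferentiableAt ℝ V x := fun x hx =>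
    (hVat x hx).differentiableAt (by simp)
  have hK : ∀ R, IsCompact {x ∈ W | V x ≤ R} := by
    intro R
    obtain ⟨K, hKW, hKc, hK⟩ := hru (max R 1) (by positivity)
    have h1 := (hV.continuousOn.mono hKW).preimage_isClosed_of_isClosed hKc.isClosed
      (isClosed_Iic (a := R))
    refine hKc.of_isClosed_subset ?_ ?_
    · have heq : {x ∈ W | V x ≤ R} = K ∩ V ⁻¹' Iic R := ?_
      · rw [heq]; exact h1
      refine Set.ext fun x => ?_
      simp only [mem_ofPred_eq, mem_inter_iff, mem_preimage, mem_Iic]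
      constructor
      · rintro ⟨a, b⟩
        refine ⟨?_, b⟩
        by_contra hx
        have := hK x ⟨a, hx⟩
        linarith [le_max_left R 1]
      · rintro ⟨a, b⟩
        exact ⟨hKW a, b⟩
    · rintro x ⟨a, b⟩
      by_contra hx
      have := hK x ⟨a, hx⟩
      linarith [le_max_left R 1]
  have hne : ∀ x ∈ W, 0 < V x → gradient V x ≠ 0 := by
    intro x hx hpos h
    have hxA : x ∉ 𝒜 := fun h' => by rw [hV0 x h'] at hpos; exact lt_irrefl _ hpos
    obtain ⟨v, hv⟩ := (hF.1 x).1
    have h1 := hd x hx v hv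
    have h2 := hwp x ⟨hx, hxA⟩
    have h3 : fderiv ℝ V x = 0 := by
      have : (InnerProductSpace.toDual ℝ (X m)).symm (fderiv ℝ V x) = 0 := h
      simpa using this
    rw [h3] at h1
    simp at h1
    linarith
  have hgr : ContDiffOn ℝ 1 (gradient V) {x ∈ W | 0 < V x} := by
    have h1 : ContDiffOn ℝ 1 (fderiv ℝ V) W :=
      hV.fderiv_of_isOpen hWo (by
        rw [one_add_one_eq_two]
        exact WithTop.coe_le_coe.2 (le_top : (2 : ℕ∞) ≤ ⊤))
    exact ((InnerProductSpace.toDual ℝ (X m)).symm.contDiff.comp_contDiffOn h1).mono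
      fun x hx => hx.1
  refine exists_deformation hWo hVd hK
    (G := fun x => (-(‖gradient V x‖ ^ 2)⁻¹) • gradient V x) ?_ ?_ hε
  · refine ContDiffOn.smul (ContDiffOn.neg (ContDiffOn.inv (hgr.norm_sq ℝ) ?_)) hgr
    intro x hx
    have := hne x hx.1 hx.2
    positivity
  · intro x hx hpos
    have h1 := hne x hx hpos
    have h2 : fderiv ℝ V x (gradient V x) = ‖gradient V x‖ ^ 2 := by
      rw [← real_inner_self_eq_norm_sq, gradient, InnerProductSpace.toDual_symm_apply]
    rw [map_smul, h2, smul_eq_mul]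
    have : ‖gradient V x‖ ^ 2 ≠ 0 := by positivity
    field_simp

end DI
end

section
/- Let 𝒜 be an attractor with attraction basin Ω = Ω(𝒜), let ℳ = {M₁,…,M_l} be a Morse decomposition of 𝒜 with 𝒟 = ∪_k M_k, and let V ∈ C^∞(Ω) be a radially unbounded strict Morse–Lyapunov function of ℳ satisfying max_{v ∈ F(x)} ∇V(x)·v ≤ −w(x) on Ω, where w ∈ C(Ω) is nonnegative with w = 0 on 𝒟 and w > 0 on Ω ∖ 𝒟. If b ∈ ℝ satisfies V(x) < b for all x ∈ 𝒜, then the sublevel set V_b = {x ∈ Ω : V(x) ≤ b} is a strong deformation retract of Ω. -/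
open Set Filter Topology MeasureTheory Metric Pointwise

namespace DI

variable {m : ℕ}

/-- Integral-free description of (approximate) solutions on `[0,T]`. -/
def MV (F : X m → Set (X m)) (ε : ℝ) (γ : ℝ → X m) (T : ℝ) : Prop :=
  ContinuousOn γ (Icc 0 T) ∧ ∀ s t : ℝ, 0 ≤ s → s < t → t ≤ T → ∀ C : Set (X m),
    IsClosed C → Convex ℝ C → (∀ u ∈ Icc s t, ∀ y, dist y (γ u) ≤ ε → F y ⊆ C) →
    (t - s)⁻¹ • (γ t - γ s) ∈ C

theorem locBound {F : X m → Set (X m)} (hF : Standing F) {K : Set (X m)} (hK : IsCompact K) :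
    ∃ C : ℝ, 0 < C ∧ ∀ x ∈ K, F x ⊆ closedBall 0 C := by
  refine hK.induction_on (p := fun s => ∃ C : ℝ, 0 < C ∧ ∀ x ∈ s, F x ⊆ closedBall 0 C)
    ⟨1, one_pos, by simp⟩ ?_ ?_ ?_
  · rintro s t hst ⟨C, hC, h⟩
    exact ⟨C, hC, fun x hx => h x (hst hx)⟩
  · rintro s t ⟨C, hC, h⟩ ⟨C', hC', h'⟩
    refine ⟨max C C', lt_max_of_lt_left hC, ?_⟩
    rintro x (hx | hx)
    · exact (h x hx).trans (closedBall_subset_closedBall (le_max_left _ _))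
    · exact (h' x hx).trans (closedBall_subset_closedBall (le_max_right _ _))
  · intro x hx
    obtain ⟨c, hc⟩ := ((hF.1 x).2.2.isBounded).subset_closedBall (0 : X m)
    obtain ⟨δ, hδ, h⟩ := hF.2 x 1 one_pos
    refine ⟨ball x δ, mem_nhdsWithin_of_mem_nhds (ball_mem_nhds x hδ), max c 0 + 1,
      by positivity, ?_⟩
    intro y hy z hz
    obtain ⟨p, hp, hpz⟩ := mem_thickening_iff.1 (h y hy hz)
    have h1 := hc hp
    rw [mem_closedBall] at h1 ⊢
    have := dist_triangle z p 0
    have := le_max_left c 0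
    linarith

theorem mv_of_sol {F : X m → Set (X m)} {γ : ℝ → X m} {T : ℝ}
    (h : IsSolOn F γ (Icc 0 T)) : MV F 0 γ T := by
  obtain ⟨g, h1, h2⟩ := h
  constructor
  · rcases le_or_gt 0 T with hT | hT
    · have hi : IntegrableOn g (Icc 0 T) := by
        have := (h1 0 (by simp [hT]) T (by simp [hT])).1
        rwa [intervalIntegrable_iff_integrableOn_Icc_of_le hT] at this
      have hc := intervalIntegral.continuousOn_primitive_interval (a := 0) (b := T)
        (f := g) (μ := volume) (by rwa [uIcc_of_le hT])
      rw [uIcc_of_le hT] at hc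
      refine (continuousOn_const.add hc : ContinuousOn (fun t => γ 0 + _) _).congr ?_
      intro t ht
      exact (h1 0 (by simp [hT]) t ht).2
    · rw [Icc_eq_empty (by linarith)]; exact continuousOn_empty _
  · intro s t hs hst ht C hC hCc hu
    have hsI : s ∈ Icc 0 T := ⟨hs, by linarith⟩
    have htI : t ∈ Icc 0 T := ⟨by linarith, ht⟩
    obtain ⟨hi, he⟩ := h1 s hsI t htI
    rw [he, add_sub_cancel_left, intervalIntegral.integral_of_le hst.le]
    have hi' : IntegrableOn g (Ioc s t) := by
      rwa [intervalIntegrable_iff_integrableOn_Ioc_of_le hst.le] at hi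
    have key := hCc.set_average_mem (μ := volume) (t := Ioc s t) (f := g) hC
      (by simp [hst]) (by simp) ?_ hi'
    · rw [setAverage_eq] at key
      simpa [Measure.real, hst.le] using key
    · have hsub : Ioc s t ⊆ Icc 0 T := fun u hu => ⟨by linarith [hu.1], by linarith [hu.2]⟩
      have := ae_restrict_of_ae_restrict_of_subset hsub h2
      filter_upwards [this, ae_restrict_mem measurableSet_Ioc] with u h3 h4
      exact hu u ⟨h4.1.le, h4.2⟩ _ (by simp) h3

theorem mv_lip {F : X m → Set (X m)} {ε : ℝ} {γ : ℝ → X m} {T C : ℝ} {K : Set (X m)}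
    (h : MV F ε γ T) (hε : ε ≤ 1) (hK : ∀ t ∈ Icc 0 T, γ t ∈ K)
    (hC : ∀ x ∈ cthickening 1 K, F x ⊆ closedBall 0 C) {s t : ℝ} (hs : s ∈ Icc 0 T)
    (ht : t ∈ Icc 0 T) : dist (γ s) (γ t) ≤ C * |s - t| := by
  have key : ∀ s t, s ∈ Icc 0 T → t ∈ Icc 0 T → s < t → dist (γ s) (γ t) ≤ C * |s - t| := by
    intro s t hs ht hst
    have := h.2 s t hs.1 hst ht.2 (closedBall 0 C) isClosed_closedBall (convex_closedBall _ _) ?_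
    · rw [mem_closedBall, dist_zero_right, norm_smul, norm_inv, Real.norm_of_nonneg (by linarith),
        inv_mul_le_iff₀ (by linarith)] at this
      rw [dist_comm, dist_eq_norm, abs_sub_comm, abs_of_pos (by linarith)]
      linarith
    · intro u hu y hy
      apply hC
      exact mem_cthickening_of_dist_le y (γ u) 1 K (hK u ⟨by linarith [hs.1, hu.1],
        by linarith [ht.2, hu.2]⟩) (hy.trans hε)
  rcases lt_trichotomy s t with h1 | h1 | h1
  · exact key s t hs ht h1
  · simp [h1]
  · rw [dist_comm, abs_sub_comm]; exact key t s ht hs h1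

theorem ftc_lip {γ : ℝ → X m} {C : NNReal} (hγ : LipschitzWith C γ) (a b : ℝ) :
    IntervalIntegrable (deriv γ) volume a b ∧ γ b = γ a + ∫ u in a..b, deriv γ u := by
  have hIntble : IntervalIntegrable (deriv γ) volume a b := by
    rw [intervalIntegrable_iff]
    refine Measure.integrableOn_of_bounded (M := C) (by simp) 
      (measurable_deriv γ).aestronglyMeasurable ?_
    exact Eventually.of_forall fun x => norm_deriv_le_of_lipschitz hγ
  refine ⟨hIntble, ?_⟩
  ext i
  let L : X m →L[ℝ] ℝ := EuclideanSpace.proj i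
  have hL : LipschitzWith (‖L‖₊ * C) (fun t => L (γ t)) := L.lipschitz.comp hγ
  have h1 := (hL.lipschitzOnWith (s := uIcc a b)).absolutelyContinuousOnInterval.integral_deriv_eq_sub
  have h2 : L (∫ u in a..b, deriv γ u) = ∫ u in a..b, L (deriv γ u) :=
    (L.intervalIntegral_comp_comm hIntble).symm
  have h3 : ∫ u in a..b, L (deriv γ u) = ∫ u in a..b, deriv (fun t => L (γ t)) u := by
    apply intervalIntegral.integral_congr_ae
    filter_upwards [hγ.ae_differentiableAt_real] with u hu _
    exact ((L.hasFDerivAt.comp_hasDerivAt u hu.hasDerivAt).deriv).symm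
  have h4 : L (γ b) = L (γ a + ∫ u in a..b, deriv γ u) := by
    rw [map_add, h2, h3, h1]; ring
  exact h4

theorem limit_sol {F : X m → Set (X m)} (hF : Standing F) {K : Set (X m)} (hK : IsCompact K)
    (𝒰 : Ultrafilter ℕ) (γ : ℕ → ℝ → X m) (T ε : ℕ → ℝ) (T₀ : ℝ)
    (hT : ∀ n, 0 ≤ T n) (hT₀ : Tendsto T 𝒰 (𝓝 T₀)) (hε : ∀ n, ε n ≤ 1)
    (hε₀ : Tendsto ε 𝒰 (𝓝 0)) (hMV : ∀ n, MV F (ε n) (γ n) (T n))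
    (hγK : ∀ n, ∀ t ∈ Icc 0 (T n), γ n t ∈ K) :
    ∃ γ' : ℝ → X m, IsSolOn F γ' (Icc 0 T₀) ∧ Tendsto (fun n => γ n 0) 𝒰 (𝓝 (γ' 0)) ∧
      Tendsto (fun n => γ n (T n)) 𝒰 (𝓝 (γ' T₀)) ∧
      ∀ t, 0 ≤ t → t < T₀ → Tendsto (fun n => γ n t) 𝒰 (𝓝 (γ' t)) := by
  obtain ⟨C, hC0, hC⟩ := locBound hF (hK.cthickening (r := 1))
  have hT₀0 : 0 ≤ T₀ := ge_of_tendsto' hT₀ hT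
  let p : ℕ → ℝ → ℝ := fun n t => max 0 (min t (T n))
  have hp : ∀ n t, p n t ∈ Icc 0 (T n) := fun n t =>
    ⟨le_max_left _ _, max_le (hT n) (min_le_right _ _)⟩
  have hpid : ∀ n t, t ∈ Icc 0 (T n) → p n t = t := fun n t ht => by
    simp only [p]; rw [min_eq_left ht.2, max_eq_right ht.1]
  have hpl : ∀ n s t, |p n s - p n t| ≤ |s - t| := fun n s t => by
    simp only [p]
    have h1 := abs_max_sub_max_le_abs (min s (T n)) (min t (T n)) 0
    have h2 := abs_min_sub_min_le_max s (T n) t (T n)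
    simp only [sub_self, abs_zero] at h2
    rw [max_comm 0, max_comm 0]
    exact h1.trans (h2.trans (max_le le_rfl (abs_nonneg _)))
  let q : ℕ → ℝ → X m := fun n t => γ n (p n t)
  have hq : ∀ n s t, dist (q n s) (q n t) ≤ C * |s - t| := fun n s t =>
    (mv_lip (hMV n) (hε n) (hγK n) hC (hp n s) (hp n t)).trans
      (mul_le_mul_of_nonneg_left (hpl n s t) hC0.le)
  have hlim : ∀ t, ∃ x, Tendsto (fun n => q n t) 𝒰 (𝓝 x) := by
    intro t
    have : ↑(𝒰.map (fun n => q n t)) ≤ 𝓟 K := by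
      rw [le_principal_iff]
      exact Filter.mem_map.2 (Filter.univ_mem' (fun n => hγK n _ (hp n t)))
    obtain ⟨x, -, hx⟩ := hK.ultrafilter_le_nhds _ this
    exact ⟨x, hx⟩
  choose γ' hγ' using hlim
  have hlip : LipschitzWith ⟨C, hC0.le⟩ γ' := by
    refine LipschitzWith.of_dist_le_mul fun s t => ?_
    exact le_of_tendsto ((hγ' s).dist (hγ' t)) (Eventually.of_forall fun n => hq n s t)
  refine ⟨γ', ⟨deriv γ', fun s _ t _ => ftc_lip hlip s t, ?_⟩, ?_, ?_, ?_⟩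
  · rw [← Measure.restrict_congr_set Ioo_ae_eq_Icc]
    rw [ae_restrict_iff' measurableSet_Ioo]
    filter_upwards [hlip.ae_differentiableAt_real] with t hdiff ht
    have hd := hdiff.hasDerivAt.tendsto_slope_zero_right
    have hcl : IsClosed (F (γ' t)) := (hF.1 _).2.2.isClosed
    rw [← hcl.closure_eq, closure_eq_iInter_cthickening, mem_iInter₂]
    intro e he
    obtain ⟨δ, hδ, hus⟩ := hF.2 (γ' t) e he
    refine isClosed_cthickening.mem_of_tendsto hd ?_
    have hev : ∀ᶠ h in 𝓝[>] (0:ℝ), h < min (T₀ - t) (δ / 3 / C) := by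
      apply mem_nhdsWithin_of_mem_nhds
      apply Iio_mem_nhds
      have := ht.2
      refine lt_min (by linarith) (by positivity)
    filter_upwards [hev, self_mem_nhdsWithin] with h hh hh0
    have hh0 : 0 < h := hh0
    have hh1 : h < T₀ - t := hh.trans_le (min_le_left _ _)
    have hh2 : C * h < δ / 3 := by
      have := hh.trans_le (min_le_right _ _)
      rw [lt_div_iff₀ hC0] at this
      linarith
    have htend : Tendsto (fun n => h⁻¹ • (q n (t + h) - q n t)) 𝒰
        (𝓝 (h⁻¹ • (γ' (t + h) - γ' t))) := ((hγ' (t+h)).sub (hγ' t)).const_smul _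
    refine isClosed_cthickening.mem_of_tendsto htend ?_
    have e1 : ∀ᶠ n in (𝒰 : Filter ℕ), t + h < T n := hT₀.eventually_const_lt (by linarith)
    have e2 : ∀ᶠ n in (𝒰 : Filter ℕ), ε n < δ / 3 := hε₀.eventually_lt_const (by linarith)
    have e3 : ∀ᶠ n in (𝒰 : Filter ℕ), dist (q n t) (γ' t) < δ / 3 :=
      (hγ' t).eventually (ball_mem_nhds _ (by linarith))
    filter_upwards [e1, e2, e3] with n h1 h2 h3
    have ht0 := ht.1
    have i1 : p n t = t := hpid n t ⟨ht0.le, by linarith⟩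
    have i2 : p n (t + h) = t + h := hpid n _ ⟨by linarith, by linarith⟩
    have := (hMV n).2 t (t+h) ht0.le (by linarith) h1.le (cthickening e (F (γ' t)))
      isClosed_cthickening ((hF.1 _).2.1.cthickening e) ?_
    · simp only [q, i1, i2]
      simpa using this
    · intro u hu y hy
      refine (hus y ?_).trans (thickening_subset_cthickening _ _)
      have i3 : p n u = u := hpid n _ ⟨by linarith [hu.1], by linarith [hu.2]⟩
      have h4 := hq n u t
      have h5 : γ n u = q n u := by simp only [q, i3]
      have h6 : C * |u - t| ≤ C * h := by
        apply mul_le_mul_of_nonneg_left _ hC0.le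
        rw [abs_of_nonneg (by linarith [hu.1])]; linarith [hu.2]
      rw [h5] at hy
      have := dist_triangle4 y (q n u) (q n t) (γ' t)
      linarith
  · have := hγ' 0
    refine this.congr fun n => ?_
    simp only [q, hpid n 0 ⟨le_rfl, hT n⟩]
  · have h1 := hγ' T₀
    have h2 : Tendsto (fun n => dist (q n T₀) (γ n (T n))) 𝒰 (𝓝 0) := by
      have h3 : Tendsto (fun n => C * |T₀ - T n|) 𝒰 (𝓝 0) := by
        have := ((tendsto_const_nhds (x := T₀)).sub hT₀).abs.const_mul C
        simpa using this
      refine squeeze_zero (fun _ => dist_nonneg) (fun n => ?_) h3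
      have := hq n T₀ (T n)
      simp only [q, hpid n (T n) ⟨hT n, le_rfl⟩] at this ⊢
      exact this
    exact (tendsto_iff_of_dist h2).1 h1
  · intro t ht0 ht
    refine (hγ' t).congr' ?_
    filter_upwards [hT₀.eventually_const_lt ht] with n hn
    simp only [q, hpid n t ⟨ht0, hn.le⟩]

theorem sol_congr {F : X m → Set (X m)} {γ γ' : ℝ → X m} {T : ℝ}
    (h : IsSolOn F γ (Icc 0 T)) (he : EqOn γ' γ (Icc 0 T)) : IsSolOn F γ' (Icc 0 T) := by
  obtain ⟨g, h1, h2⟩ := h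
  refine ⟨g, fun s hs t ht => ⟨(h1 s hs t ht).1, ?_⟩, ?_⟩
  · rw [he hs, he ht]; exact (h1 s hs t ht).2
  · filter_upwards [h2, ae_restrict_mem measurableSet_Icc] with u hu hI
    rwa [he hI]

theorem sol_of_mv {F : X m → Set (X m)} (hF : Standing F) {γ : ℝ → X m} {T : ℝ} (hT : 0 ≤ T)
    (h : MV F 0 γ T) : IsSolOn F γ (Icc 0 T) := by
  obtain ⟨γ', h1, h2, h3, h4⟩ := limit_sol hF (isCompact_Icc.image_of_continuousOn h.1)
    (Ultrafilter.of atTop) (fun _ => γ) (fun _ => T) (fun _ => 0) T (fun _ => hT)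
    tendsto_const_nhds (by simp) tendsto_const_nhds (fun _ => h)
    (fun _ t ht => mem_image_of_mem _ ht)
  refine sol_congr h1 fun t ht => ?_
  rcases ht.2.lt_or_eq with h5 | h5
  · exact tendsto_nhds_unique tendsto_const_nhds (h4 t ht.1 h5)
  · rw [h5]; exact tendsto_nhds_unique tendsto_const_nhds h3

theorem mv_mono {F : X m → Set (X m)} {ε : ℝ} {γ : ℝ → X m} {T T' : ℝ} (h : MV F ε γ T)
    (hT : T' ≤ T) : MV F ε γ T' :=
  ⟨h.1.mono (Icc_subset_Icc_right hT), fun s t hs hst ht => h.2 s t hs hst (ht.trans hT)⟩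

theorem mv_shift {F : X m → Set (X m)} {ε : ℝ} {γ : ℝ → X m} {T a : ℝ} (h : MV F ε γ T)
    (ha : 0 ≤ a) : MV F ε (fun t => γ (a + t)) (T - a) := by
  constructor
  · refine h.1.comp (by fun_prop) fun t ht => ⟨by linarith [ht.1], by linarith [ht.2]⟩
  · intro s t hs hst ht C hC hCc hu
    have := h.2 (a + s) (a + t) (by linarith) (by linarith) (by linarith) C hC hCc ?_
    · simpa using this
    · intro u hu' y hy
      exact hu (u - a) ⟨by linarith [hu'.1], by linarith [hu'.2]⟩ y (by simpa using hy)

theorem mv_glue {F : X m → Set (X m)} {ε : ℝ} {γ γ₁ γ₂ : ℝ → X m} {T₁ T₂ : ℝ}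
    (hT₁ : 0 ≤ T₁) (hT₂ : 0 ≤ T₂) (h₁ : MV F ε γ₁ T₁) (h₂ : MV F ε γ₂ T₂)
    (e₁ : ∀ t ∈ Icc 0 T₁, γ t = γ₁ t) (e₂ : ∀ t ∈ Icc 0 T₂, γ (T₁ + t) = γ₂ t) :
    MV F ε γ (T₁ + T₂) := by
  have e₂' : ∀ t ∈ Icc T₁ (T₁ + T₂), γ t = γ₂ (t - T₁) := by
    intro t ht
    rw [← e₂ (t - T₁) ⟨by linarith [ht.1], by linarith [ht.2]⟩]
    congr 1; ring
  constructor
  · rw [← Icc_union_Icc_eq_Icc hT₁ (by linarith : T₁ ≤ T₁ + T₂)]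
    refine ContinuousOn.union_of_isClosed (h₁.1.congr e₁) ?_ isClosed_Icc isClosed_Icc
    refine ContinuousOn.congr (f := fun t => γ₂ (t - T₁)) ?_ e₂'
    exact h₂.1.comp (by fun_prop) fun t ht => ⟨by linarith [ht.1], by linarith [ht.2]⟩
  · have A : ∀ s t, 0 ≤ s → s < t → t ≤ T₁ → ∀ C : Set (X m), IsClosed C → Convex ℝ C →
        (∀ u ∈ Icc s t, ∀ y, dist y (γ u) ≤ ε → F y ⊆ C) → (t - s)⁻¹ • (γ t - γ s) ∈ C := by
      intro s t hs hst ht C hC hCc hu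
      rw [e₁ s ⟨hs, by linarith⟩, e₁ t ⟨by linarith, ht⟩]
      refine h₁.2 s t hs hst ht C hC hCc fun u hu' y hy => hu u hu' y ?_
      rwa [e₁ u ⟨by linarith [hu'.1], by linarith [hu'.2]⟩]
    have B : ∀ s t, T₁ ≤ s → s < t → t ≤ T₁ + T₂ → ∀ C : Set (X m), IsClosed C → Convex ℝ C →
        (∀ u ∈ Icc s t, ∀ y, dist y (γ u) ≤ ε → F y ⊆ C) → (t - s)⁻¹ • (γ t - γ s) ∈ C := by
      intro s t hs hst ht C hC hCc hu
      rw [e₂' s ⟨hs, by linarith⟩, e₂' t ⟨by linarith, ht⟩]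
      have := h₂.2 (s - T₁) (t - T₁) (by linarith) (by linarith) (by linarith) C hC hCc
        fun u hu' y hy => hu (T₁ + u) ⟨by linarith [hu'.1], by linarith [hu'.2]⟩ y ?_
      · simpa using this
      rwa [e₂ u ⟨by linarith [hu'.1], by linarith [hu'.2]⟩]
    intro s t hs hst ht C hC hCc hu
    rcases le_or_gt t T₁ with h3 | h3
    · exact A s t hs hst h3 C hC hCc hu
    rcases le_or_gt T₁ s with h4 | h4
    · exact B s t h4 hst ht C hC hCc hu
    have a := A s T₁ hs h4 le_rfl C hC hCc fun u hu' => hu u ⟨hu'.1, by linarith [hu'.2]⟩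
    have b := B T₁ t le_rfl h3 ht C hC hCc fun u hu' => hu u ⟨by linarith [hu'.1], hu'.2⟩
    have p1 : 0 < t - s := by linarith
    have p2 : 0 < T₁ - s := by linarith
    have p3 : 0 < t - T₁ := by linarith
    have := hCc a b (a := (T₁ - s) / (t - s)) (b := (t - T₁) / (t - s)) (by positivity)
      (by positivity) (by field_simp; ring)
    convert this using 1
    rw [smul_smul, smul_smul]
    have q1 : (T₁ - s) / (t - s) * (T₁ - s)⁻¹ = (t - s)⁻¹ := by field_simp
    have q2 : (t - T₁) / (t - s) * (t - T₁)⁻¹ = (t - s)⁻¹ := by field_simp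
    rw [q1, q2, ← smul_add]
    congr 1; abel

theorem mv_concat {F : X m → Set (X m)} {ε : ℝ} {γ₁ γ₂ : ℝ → X m} {T₁ T₂ : ℝ}
    (hT₁ : 0 ≤ T₁) (hT₂ : 0 ≤ T₂) (h₁ : MV F ε γ₁ T₁) (h₂ : MV F ε γ₂ T₂)
    (he : γ₂ 0 = γ₁ T₁) : ∃ γ : ℝ → X m, MV F ε γ (T₁ + T₂) ∧ (∀ t ≤ T₁, γ t = γ₁ t) ∧
      ∀ t ≥ 0, γ (T₁ + t) = γ₂ t := by
  let γ : ℝ → X m := fun t => if t ≤ T₁ then γ₁ t else γ₂ (t - T₁)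
  have a : ∀ t ≤ T₁, γ t = γ₁ t := fun t ht => by simp [γ, ht]
  have b : ∀ t ≥ 0, γ (T₁ + t) = γ₂ t := fun t ht => by
    rcases eq_or_lt_of_le ht with h | h
    · rw [← h, add_zero, he, a _ le_rfl]
    · simp [γ, h]
  exact ⟨γ, mv_glue hT₁ hT₂ h₁ h₂ (fun t ht => a t ht.2) (fun t ht => b t ht.1), a, b⟩

theorem euler {F : X m → Set (X m)} (hF : Standing F) {K : Set (X m)} {C : ℝ} (hC0 : 0 < C)
    (hC : ∀ x ∈ cthickening 1 K, F x ⊆ closedBall 0 C) {y : X m} (hy : y ∈ K) {h ε : ℝ}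
    (hh : 0 < h) (hε : C * h ≤ ε) (k : ℕ) (hk : C * (k * h) ≤ 1) :
    ∃ γ : ℝ → X m, γ 0 = y ∧ MV F ε γ (k * h) ∧
      ∀ t ∈ Icc (0:ℝ) (k * h), dist (γ t) y ≤ C * t := by
  induction k with
  | zero =>
    refine ⟨fun _ => y, rfl, ⟨continuousOn_const, ?_⟩, ?_⟩
    · intro s t hs hst ht
      simp at ht; linarith
    · intro t ht
      simpa using mul_nonneg hC0.le ht.1
  | succ k ih =>
    have hkk : C * (k * h) ≤ 1 := by
      push_cast at hk; nlinarith
    obtain ⟨γ, h0, hm, hd⟩ := ih hkk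
    have hkh : 0 ≤ k * h := by positivity
    obtain ⟨v, hv⟩ := (hF.1 (γ (k * h))).1
    have hvC : ‖v‖ ≤ C := by
      have := hC (γ (k*h)) (mem_cthickening_of_dist_le _ y 1 K hy
        ((hd _ ⟨hkh, le_rfl⟩).trans hkk)) hv
      simpa using this
    have hm2 : MV F ε (fun t => γ (k * h) + t • v) h := by
      refine ⟨by fun_prop, ?_⟩
      intro s t hs hst ht Z hZ hZc hu
      have : (t - s)⁻¹ • (γ (k * h) + t • v - (γ (k * h) + s • v)) = v := by
        rw [add_sub_add_left_eq_sub, ← sub_smul, smul_smul, inv_mul_cancel₀ (by linarith), one_smul]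
      rw [this]
      refine hu s ⟨le_rfl, hst.le⟩ (γ (k * h)) ?_ hv
      rw [dist_comm, dist_eq_norm, add_sub_cancel_left, norm_smul, Real.norm_of_nonneg hs]
      nlinarith [norm_nonneg v]
    obtain ⟨γ', hm', ha, hb⟩ := mv_concat hkh hh.le hm hm2 (by simp)
    have hs : ((k + 1 : ℕ) : ℝ) * h = k * h + h := by push_cast; ring
    rw [hs]
    refine ⟨γ', by rw [ha 0 hkh, h0], hm', ?_⟩
    intro t ht
    rcases le_or_gt t (k * h) with h1 | h1
    · rw [ha t h1]; exact hd t ⟨ht.1, h1⟩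
    · have := hb (t - k * h) (by linarith)
      rw [add_sub_cancel] at this
      rw [this]
      have h2 := hd _ ⟨hkh, le_rfl⟩
      have h3 : dist (γ (k * h) + (t - k * h) • v) (γ (k * h)) ≤ C * (t - k * h) := by
        rw [dist_eq_norm, add_sub_cancel_left, norm_smul, Real.norm_of_nonneg (by linarith)]
        nlinarith [norm_nonneg v]
      have := dist_triangle (γ (k * h) + (t - k * h) • v) (γ (k * h)) y
      linarith

theorem exists_local {F : X m → Set (X m)} (hF : Standing F) {K : Set (X m)} (hK : IsCompact K) :
    ∃ η > 0, ∀ y ∈ K, ∃ γ : ℝ → X m, MV F 0 γ η ∧ γ 0 = y := by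
  obtain ⟨C, hC0, hC⟩ := locBound hF (hK.cthickening (r := 1))
  refine ⟨1 / C, by positivity, fun y hy => ?_⟩
  have key : ∀ n : ℕ, ∃ γ : ℝ → X m, γ 0 = y ∧ MV F (1 / ((n : ℝ) + 1)) γ (1 / C) ∧
      ∀ t ∈ Icc (0:ℝ) (1 / C), γ t ∈ cthickening 1 K := by
    intro n
    have hn : (0:ℝ) < (n:ℝ) + 1 := by positivity
    have e : ((n + 1 : ℕ) : ℝ) * (1 / C / (n + 1)) = 1 / C := by
      push_cast; field_simp
    have e2 : C * (1 / C) = 1 := by field_simp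
    obtain ⟨γ, h0, hm, hd⟩ := euler hF hC0 hC hy (h := 1 / C / (n + 1))
      (ε := 1 / ((n : ℝ) + 1)) (by positivity) (by apply le_of_eq; field_simp) (n + 1)
      (by rw [e, e2])
    rw [e] at hm hd
    refine ⟨γ, h0, hm, fun t ht => mem_cthickening_of_dist_le _ y 1 K hy ?_⟩
    refine (hd t ht).trans ?_
    rw [← e2]
    exact mul_le_mul_of_nonneg_left ht.2 hC0.le
  choose γ h0 hm hd using key
  obtain ⟨γ', h1, h2, -⟩ := limit_sol hF (hK.cthickening (r := 1)) (Ultrafilter.of atTop) γ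
    (fun _ => 1 / C) (fun n => 1 / ((n : ℝ) + 1)) (1 / C) (fun _ => by positivity)
    tendsto_const_nhds (fun n => by
      rw [div_le_one (by positivity)]; linarith [(Nat.cast_nonneg n : (0:ℝ) ≤ n)])
    (tendsto_one_div_add_atTop_nhds_zero_nat.mono_left (Ultrafilter.of_le _)) hm hd
  refine ⟨γ', mv_of_sol h1, ?_⟩
  simp only [h0] at h2
  exact (tendsto_nhds_unique tendsto_const_nhds h2).symm

theorem sol_mono {F : X m → Set (X m)} {γ : ℝ → X m} {I J : Set ℝ} (h : IsSolOn F γ I)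
    (hJ : J ⊆ I) : IsSolOn F γ J := by
  obtain ⟨g, h1, h2⟩ := h
  exact ⟨g, fun s hs t ht => h1 s (hJ hs) t (hJ ht), ae_restrict_of_ae_restrict_of_subset hJ h2⟩

theorem mem_reachSet_single {F : X m → Set (X m)} {t : ℝ} {x y : X m} :
    y ∈ reachSet F t {x} ↔ ∃ γ : ℝ → X m, IsSolOn F γ (Icc 0 t) ∧ γ 0 = x ∧ γ t = y := by
  simp [reachSet, reach]

theorem basin_inv {F : X m → Set (X m)} (hF : Standing F) {𝒜 : Set (X m)} {γ : ℝ → X m} {T t : ℝ}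
    (h : IsSolOn F γ (Icc 0 T)) (h0 : γ 0 ∈ basin F 𝒜) (ht : t ∈ Icc 0 T) :
    γ t ∈ basin F 𝒜 := by
  have hm : MV F 0 γ t := mv_mono (mv_of_sol h) ht.2
  constructor
  · intro T' hT' s hs γ₂ hγ₂ hγ₂0
    obtain ⟨γ₃, h3, a3, b3⟩ := mv_concat ht.1 hs.1 hm (mv_of_sol hγ₂) hγ₂0
    obtain ⟨γ₄, h4, e4⟩ := h0.1 (t + T') (by linarith [ht.1]) (t + s)
      ⟨by linarith [ht.1, hs.1], by linarith [hs.2]⟩ γ₃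
      (sol_of_mv hF (by linarith [ht.1, hs.1]) h3) (by rw [a3 0 ht.1]; rfl)
    refine ⟨fun u => γ₄ (t + u), ?_, ?_⟩
    · have := mv_shift (mv_of_sol h4) ht.1
      rw [add_sub_cancel_left] at this
      exact sol_of_mv hF hT'.le this
    · intro u hu
      simp only
      rw [e4 ⟨by linarith [ht.1, hu.1], by linarith [hu.2]⟩, b3 u hu.1]
  · intro ε hε
    obtain ⟨T₁, hT₁⟩ := h0.2 ε hε
    refine ⟨max T₁ 0, fun s hs y hy => ?_⟩
    have hs1 : T₁ ≤ s := (le_max_left _ _).trans hs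
    have hs0 : 0 ≤ s := (le_max_right _ _).trans hs
    obtain ⟨γ₂, hγ₂, h20, h2s⟩ := mem_reachSet_single.1 hy
    obtain ⟨γ₃, h3, a3, b3⟩ := mv_concat ht.1 hs0 hm (mv_of_sol hγ₂) h20
    refine hT₁ (t + s) (by linarith [ht.1]) y (mem_reachSet_single.2 ⟨γ₃, 
      sol_of_mv hF (by linarith [ht.1]) h3, a3 0 ht.1, ?_⟩)
    rw [b3 s hs0, h2s]

theorem V_mono {F : X m → Set (X m)} (hF : Standing F) {𝒜 : Set (X m)} {l : ℕ}
    {M : ℕ → Set (X m)} {V : X m → ℝ} (hML : IsMLFunction F 𝒜 l M V)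
    (hD : IsClosed (⋃ k ∈ Icc 1 l, M k)) {γ : ℝ → X m} {T : ℝ} (hT : 0 ≤ T)
    (h : IsSolOn F γ (Icc 0 T)) (h0 : γ 0 ∈ basin F 𝒜) : V (γ T) ≤ V (γ 0) := by
  by_contra hlt
  push Not at hlt
  have hcont := (mv_of_sol h).1
  have hbas : ∀ t ∈ Icc 0 T, γ t ∈ basin F 𝒜 := fun t ht => basin_inv hF h h0 ht
  have hφ : ContinuousOn (fun t => V (γ t)) (Icc 0 T) := hML.1.comp hcont hbas
  have hfin : (V '' (⋃ k ∈ Icc 1 l, M k)).Finite := by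
    rw [image_iUnion₂]
    refine (finite_Icc 1 l).biUnion fun k hk => ?_
    obtain ⟨c, hc⟩ := hML.2.1 k hk.1 hk.2
    refine (finite_singleton c).subset ?_
    rintro _ ⟨x, hx, rfl⟩
    exact hc x hx
  obtain ⟨c, hc, hcD⟩ := ((Ioo_infinite hlt).sdiff hfin).nonempty
  have hcomp : IsCompact (Icc 0 T ∩ (fun t => V (γ t)) ⁻¹' Iic c) :=
    isCompact_Icc.of_isClosed_subset (hφ.preimage_isClosed_of_isClosed isClosed_Icc isClosed_Iic)
      inter_subset_left
  obtain ⟨t, ⟨ht, htc⟩, hmax⟩ := hcomp.exists_isGreatest ⟨0, ⟨le_rfl, hT⟩, hc.1.le⟩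
  have htc' : V (γ t) ≤ c := htc
  obtain ⟨t', ht', he⟩ := intermediate_value_Icc ht.2 (hφ.mono (Icc_subset_Icc_left ht.1))
    ⟨htc', hc.2.le⟩
  have he : V (γ t') = c := he
  have htt : t' = t := le_antisymm (hmax ⟨⟨ht.1.trans ht'.1, ht'.2⟩, he.le⟩) ht'.1
  rw [htt] at he
  have htT : t < T := by
    rcases ht.2.lt_or_eq with h1 | h1
    · exact h1
    · rw [h1] at he; linarith [hc.2]
  have hnD : γ t ∉ ⋃ k ∈ Icc 1 l, M k := fun hh => hcD ⟨_, hh, he⟩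
  have hev : ∀ᶠ u in 𝓝[Icc 0 T] t, γ u ∈ (⋃ k ∈ Icc 1 l, M k)ᶜ :=
    (hcont t ht).eventually (hD.isOpen_compl.mem_nhds hnD)
  obtain ⟨δ, hδ, hball⟩ := Metric.mem_nhdsWithin_iff.1 hev
  set t₂ := min T (t + δ / 2) with ht₂
  have h2 : t < t₂ := lt_min htT (by linarith)
  have h2T : t₂ ≤ T := min_le_left _ _
  have h2δ : t₂ ≤ t + δ / 2 := min_le_right _ _
  have hanti := hML.2.2 t t₂ γ (sol_mono h (Icc_subset_Icc ht.1 h2T)) (fun u hu => by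
    have huI : u ∈ Icc 0 T := ⟨ht.1.trans hu.1, hu.2.trans h2T⟩
    refine ⟨hbas u huI, hball ⟨?_, huI⟩⟩
    rw [mem_ball, Real.dist_eq, abs_of_nonneg (by linarith [hu.1])]
    linarith [hu.2])
  have h3 := hanti ⟨le_rfl, h2.le⟩ ⟨h2.le, le_rfl⟩ h2
  simp only at h3
  have := hmax ⟨⟨ht.1.trans h2.le, h2T⟩, show V (γ t₂) ≤ c by linarith⟩
  linarith

theorem sublevel_compact {Ω : Set (X m)} {V : X m → ℝ} (hV : ContinuousOn V Ω)
    (hru : RadiallyUnbounded Ω V) (R : ℝ) : IsCompact {x ∈ Ω | V x ≤ R} := by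
  obtain ⟨K, hKΩ, hK, h⟩ := hru (max R 1) (by positivity)
  have : {x ∈ Ω | V x ≤ R} = K ∩ V ⁻¹' Iic R := by
    ext x
    constructor
    · rintro ⟨h1, h2⟩
      refine ⟨?_, h2⟩
      by_contra hx
      have := h x ⟨h1, hx⟩
      have := le_max_left R 1
      linarith
    · rintro ⟨h1, h2⟩
      exact ⟨hKΩ h1, h2⟩
  rw [this]
  exact hK.of_isClosed_subset ((hV.mono hKΩ).preimage_isClosed_of_isClosed hK.isClosed isClosed_Iic)
    inter_subset_left

theorem first_exit {φ : ℝ → ℝ} {a s c : ℝ} (hφ : ContinuousOn φ (Icc a s))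
    (h : ∃ t ∈ Icc a s, c ≤ φ t) : ∃ t ∈ Icc a s, c ≤ φ t ∧ (∀ u ∈ Ioc a t, φ u ≤ c) ∧
      (a < t → φ a ≤ c) := by
  have hcomp : IsCompact (Icc a s ∩ φ ⁻¹' Ici c) :=
    isCompact_Icc.of_isClosed_subset (hφ.preimage_isClosed_of_isClosed isClosed_Icc isClosed_Ici)
      inter_subset_left
  obtain ⟨t₀, ht₀, h₀⟩ := h
  obtain ⟨t, ⟨ht, htc⟩, hmin⟩ := hcomp.exists_isLeast ⟨t₀, ht₀, h₀⟩
  have hlt : ∀ u ∈ Ico a t, φ u < c := by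
    intro u hu
    by_contra hh
    push Not at hh
    have := hmin ⟨⟨hu.1, hu.2.le.trans ht.2⟩, hh⟩
    linarith [hu.2]
  refine ⟨t, ht, htc, fun u hu => ?_, fun h => (hlt a ⟨le_rfl, h⟩).le⟩
  rcases hu.2.lt_or_eq with h1 | h1
  · exact (hlt u ⟨hu.1.le, h1⟩).le
  · subst h1
    obtain ⟨v, hv, he⟩ := intermediate_value_Icc ht.1 (hφ.mono (Icc_subset_Icc_right ht.2))
      ⟨(hlt a ⟨le_rfl, hu.1⟩).le, htc⟩
    have : u ≤ v := hmin ⟨⟨hv.1, hv.2.trans ht.2⟩, he.ge⟩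
    have : v = u := le_antisymm hv.2 this
    rw [← this, he]

theorem mem_cth_iff {S : Set (X m)} {r : ℝ} (hr : 0 ≤ r) (hS : S.Nonempty) {z : X m} :
    z ∈ cthickening r S ↔ infDist z S ≤ r := by
  rw [mem_cthickening_iff, infDist, ENNReal.le_ofReal_iff_toReal_le (infEDist_ne_top hS) hr]

theorem limit_bdd {F : X m → Set (X m)} (hF : Standing F) {K : Set (X m)} (hK : IsCompact K)
    (γ : ℕ → ℝ → X m) (t : ℕ → ℝ) (B : ℝ) (x : X m) (ht : ∀ n, t n ∈ Icc 0 B)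
    (hMV : ∀ n, MV F 0 (γ n) (t n)) (hγK : ∀ n, ∀ u ∈ Icc 0 (t n), γ n u ∈ K)
    (hx : Tendsto (fun n => γ n 0) atTop (𝓝 x)) :
    ∃ (γ' : ℝ → X m) (τ : ℝ) (𝒰 : Ultrafilter ℕ), τ ∈ Icc 0 B ∧ IsSolOn F γ' (Icc 0 τ) ∧
      γ' 0 = x ∧ Tendsto t 𝒰 (𝓝 τ) ∧ Tendsto (fun n => γ n (t n)) 𝒰 (𝓝 (γ' τ)) := by
  have hle : ↑((Ultrafilter.of (atTop : Filter ℕ)).map t) ≤ 𝓟 (Icc 0 B) := by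
    rw [le_principal_iff]
    exact Filter.mem_map.2 (Filter.univ_mem' ht)
  obtain ⟨τ, hτ, hτ'⟩ := isCompact_Icc.ultrafilter_le_nhds _ hle
  have hτ' : Tendsto t (Ultrafilter.of (atTop : Filter ℕ)) (𝓝 τ) := hτ'
  obtain ⟨γ', h1, h2, h3, -⟩ := limit_sol hF hK (Ultrafilter.of atTop) γ t (fun _ => 0) τ
    (fun n => (ht n).1) hτ' (by simp) tendsto_const_nhds hMV hγK
  exact ⟨γ', τ, _, hτ, h1, tendsto_nhds_unique h2 (hx.mono_left (Ultrafilter.of_le _)), hτ', h3⟩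

/-- Solutions starting near `x` stay near the trapping compact set `Kx` on bounded times. -/
theorem tube {F : X m → Set (X m)} (hF : Standing F) {x : X m} {Kx : Set (X m)}
    (hK : IsCompact Kx) (hxK : x ∈ Kx)
    (hinv : ∀ T ≥ 0, ∀ γ : ℝ → X m, IsSolOn F γ (Icc 0 T) → γ 0 = x → γ T ∈ Kx) (B : ℝ) :
    ∃ δ > 0, ∀ x' ∈ ball x δ, ∀ s ≤ B, ∀ γ : ℝ → X m, IsSolOn F γ (Icc 0 s) → γ 0 = x' →
      ∀ t ∈ Icc 0 s, γ t ∈ cthickening 1 Kx := by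
  by_contra! hcon
  have hpos : ∀ n : ℕ, (0:ℝ) < 1 / ((n:ℝ) + 1) := fun n => by positivity
  choose x' hx' s hs γ hγ hγ0 t ht htK using fun n : ℕ => hcon (1 / ((n:ℝ) + 1)) (hpos n)
  have hne : Kx.Nonempty := ⟨x, hxK⟩
  have hmem : ∀ z, z ∈ cthickening 1 Kx ↔ infDist z Kx ≤ 1 := fun z =>
    mem_cth_iff zero_le_one hne
  have hφ : ∀ n, ContinuousOn (fun u => infDist (γ n u) Kx) (Icc 0 (s n)) := fun n =>
    (continuous_infDist_pt Kx).comp_continuousOn (mv_of_sol (hγ n)).1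
  have hex := fun n => first_exit (c := 1) (hφ n) ⟨t n, ht n, by
    have := htK n
    rw [hmem] at this
    linarith⟩
  choose τ hτ hτ1 hτ2 hτ3 using hex
  have h0 : ∀ n, infDist (γ n 0) Kx ≤ 1 := fun n => by
    refine (infDist_le_dist_of_mem hxK).trans ?_
    rw [hγ0]
    refine (mem_ball.1 (hx' n)).le.trans ?_
    rw [div_le_one (by positivity)]; linarith [(Nat.cast_nonneg n : (0:ℝ) ≤ n)]
  obtain ⟨γ', τ', 𝒰, hτ', hsol, hx0, htt, hlim⟩ := limit_bdd hF (hK.cthickening (r := 1)) γ τ B x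
    (fun n => ⟨(hτ n).1, (hτ n).2.trans (hs n)⟩)
    (fun n => mv_mono (mv_of_sol (hγ n)) (hτ n).2)
    (fun n u hu => by
      rw [hmem]
      rcases hu.1.eq_or_lt with h1 | h1
      · rw [← h1]; exact h0 n
      · exact hτ2 n u ⟨h1, hu.2⟩)
    (by
      simp only [hγ0]
      rw [tendsto_iff_dist_tendsto_zero]
      exact squeeze_zero (fun _ => dist_nonneg) (fun n => (mem_ball.1 (hx' n)).le)
        tendsto_one_div_add_atTop_nhds_zero_nat)
  have h1 := hinv τ' hτ'.1 γ' hsol hx0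
  have h2 : 1 ≤ infDist (γ' τ') Kx :=
    ge_of_tendsto' (((continuous_infDist_pt Kx).tendsto _).comp hlim) hτ1
  rw [infDist_zero_of_mem h1] at h2
  linarith

/-- Points near `x` have all their trajectories attracted. -/
theorem tube2 {F : X m → Set (X m)} (hF : Standing F) {𝒜 U : Set (X m)} (h𝒜 : IsCompact 𝒜)
    (hne : 𝒜.Nonempty) (hω : omegaLim F U = 𝒜) {r : ℝ} (hr : 0 < r)
    (hrU : cthickening r 𝒜 ⊆ U) {x : X m} {Kx : Set (X m)}
    (hK : IsCompact Kx) (hxK : x ∈ Kx)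
    (hinv : ∀ T ≥ 0, ∀ γ : ℝ → X m, IsSolOn F γ (Icc 0 T) → γ 0 = x → γ T ∈ Kx)
    {T₀ : ℝ} (hT₀ : 0 ≤ T₀) (hatt : ∀ t ≥ T₀, ∀ y ∈ reachSet F t {x}, infDist y 𝒜 < r) :
    ∃ δ > 0, ∀ x' ∈ ball x δ, ∀ s, ∀ γ : ℝ → X m, IsSolOn F γ (Icc 0 s) → γ 0 = x' →
      ∀ t ∈ Icc 0 s, γ t ∈ cthickening 1 Kx ∪ cthickening r 𝒜 ∧
        (T₀ ≤ t → γ t ∈ cthickening r 𝒜) := by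
  obtain ⟨δ₁, hδ₁, htube⟩ := tube hF hK hxK hinv T₀
  have hmem : ∀ z, z ∈ cthickening r 𝒜 ↔ infDist z 𝒜 ≤ r := fun z =>
    mem_cth_iff hr.le hne
  suffices H : ∃ δ > 0, ∀ x' ∈ ball x δ, ∀ s, ∀ γ : ℝ → X m, IsSolOn F γ (Icc 0 s) → γ 0 = x' →
      ∀ t ∈ Icc 0 s, T₀ ≤ t → infDist (γ t) 𝒜 < r by
    obtain ⟨δ, hδ, H⟩ := H
    refine ⟨min δ δ₁, lt_min hδ hδ₁, fun x' hx' s γ hγ hγ0 t ht => ?_⟩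
    have a : T₀ ≤ t → γ t ∈ cthickening r 𝒜 := fun h =>
      (hmem _).2 (H x' (ball_subset_ball (min_le_left _ _) hx') s γ hγ hγ0 t ht h).le
    refine ⟨?_, a⟩
    rcases le_or_gt T₀ t with h | h
    · exact Or.inr (a h)
    · refine Or.inl ?_
      exact htube x' (ball_subset_ball (min_le_right _ _) hx') t h.le γ
        (sol_mono hγ (Icc_subset_Icc_right ht.2)) hγ0 t ⟨ht.1, le_rfl⟩
  by_contra! hcon
  have hpos : ∀ n : ℕ, (0:ℝ) < min δ₁ (1 / ((n:ℝ) + 1)) := fun n => lt_min hδ₁ (by positivity)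
  choose x' hx' s γ hγ hγ0 t ht htT htr using fun n : ℕ => hcon _ (hpos n)
  have hφ : ∀ n, ContinuousOn (fun u => infDist (γ n u) 𝒜) (Icc T₀ (s n)) := fun n =>
    (continuous_infDist_pt 𝒜).comp_continuousOn ((mv_of_sol (hγ n)).1.mono
      (Icc_subset_Icc_left hT₀))
  have hex := fun n => first_exit (c := r) (hφ n) ⟨t n, ⟨htT n, (ht n).2⟩, htr n⟩
  choose τ hτ hτ1 hτ2 hτ3 using hex
  have hKK : IsCompact (cthickening 1 Kx ∪ cthickening r 𝒜) :=
    hK.cthickening.union h𝒜.cthickening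
  have hval : ∀ n, ∀ u ∈ Icc 0 (τ n), γ n u ∈ cthickening 1 Kx ∪ cthickening r 𝒜 := by
    intro n u hu
    rcases le_or_gt u T₀ with h | h
    · left
      exact htube (x' n) (ball_subset_ball (min_le_left _ _) (hx' n)) u h (γ n)
        (sol_mono (hγ n) (Icc_subset_Icc_right (hu.2.trans (hτ n).2))) (hγ0 n) u ⟨hu.1, le_rfl⟩
    · right
      exact (hmem _).2 (hτ2 n u ⟨h, hu.2⟩)
  have hconv : Tendsto (fun n => γ n 0) atTop (𝓝 x) := by
    simp only [hγ0]
    rw [tendsto_iff_dist_tendsto_zero]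
    exact squeeze_zero (fun _ => dist_nonneg)
      (fun n => (mem_ball.1 (hx' n)).le.trans (min_le_right _ _))
      tendsto_one_div_add_atTop_nhds_zero_nat
  by_cases hb : ∃ B, ∃ᶠ n in atTop, τ n ≤ B
  · obtain ⟨B, hB⟩ := hb
    obtain ⟨f, hf, hfB⟩ := extraction_of_frequently_atTop hB
    obtain ⟨γ', τ', 𝒰, hτ', hsol, hx0, htt, hlim⟩ := limit_bdd hF hKK (fun n => γ (f n))
      (fun n => τ (f n)) B x (fun n => ⟨hT₀.trans (hτ _).1, hfB n⟩)
      (fun n => mv_mono (mv_of_sol (hγ _)) (hτ _).2) (fun n => hval _)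
      (hconv.comp hf.tendsto_atTop)
    have h1 : T₀ ≤ τ' := ge_of_tendsto' htt fun n => (hτ _).1
    have h2 := hatt τ' h1 (γ' τ') (mem_reachSet_single.2 ⟨γ', hsol, hx0, rfl⟩)
    have h3 : r ≤ infDist (γ' τ') 𝒜 :=
      ge_of_tendsto' (((continuous_infDist_pt 𝒜).tendsto _).comp hlim) fun n => hτ1 _
    linarith
  · push Not at hb
    have hτtop : Tendsto τ atTop atTop := by
      rw [Filter.tendsto_atTop]
      intro B
      exact (hb B).mono fun n hn => hn.le
    obtain ⟨y, -, f, hf, hlim⟩ := hKK.tendsto_subseq fun n => hval n (τ n)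
      ⟨hT₀.trans (hτ n).1, le_rfl⟩
    have hyr : r ≤ infDist y 𝒜 :=
      ge_of_tendsto' (((continuous_infDist_pt 𝒜).tendsto _).comp hlim) fun n => hτ1 _
    have hτf : Tendsto (fun n => τ (f n)) atTop atTop := hτtop.comp hf.tendsto_atTop
    obtain ⟨N, hN⟩ := eventually_atTop.1 (hτf.eventually_gt_atTop T₀)
    have hy : y ∈ omegaLim F U := by
      refine ⟨fun n => τ (f (n + N)) - T₀, fun n => γ (f (n + N)) (τ (f (n + N))), ?_, ?_, ?_⟩
      · exact tendsto_atTop_add_const_right _ _ (hτf.comp (tendsto_add_atTop_nat N))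
      · intro n
        have hlt := hN (n + N) (by omega)
        refine mem_iUnion₂.2 ⟨γ (f (n + N)) T₀, hrU ((hmem _).2 ?_), ?_⟩
        · exact hτ3 _ hlt
        · refine ⟨fun u => γ (f (n + N)) (T₀ + u), ?_, by simp, by simp⟩
          exact sol_of_mv hF (by linarith)
            (mv_shift (mv_mono (mv_of_sol (hγ _)) (hτ _).2) hT₀)
      · exact hlim.comp (tendsto_add_atTop_nat N)
    rw [hω] at hy
    rw [infDist_zero_of_mem hy] at hyr
    linarith

theorem extend_sol {F : X m → Set (X m)} (hF : Standing F) {K : Set (X m)} (hK : IsCompact K)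
    {x : X m} (hx : ∀ s, ∀ γ : ℝ → X m, IsSolOn F γ (Icc 0 s) → γ 0 = x →
      ∀ t ∈ Icc 0 s, γ t ∈ K) : NoBlowup F {x} := by
  obtain ⟨η, hη, hex⟩ := exists_local hF hK
  intro T hT s hs γ hγ hγ0
  have key : ∀ k : ℕ, ∃ γ' : ℝ → X m, MV F 0 γ' (s + k * η) ∧ EqOn γ' γ (Icc 0 s) := by
    intro k
    induction k with
    | zero => exact ⟨γ, by simpa using mv_of_sol hγ, fun _ _ => rfl⟩
    | succ k ih =>
      obtain ⟨γ', h1, h2⟩ := ih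
      have hp : 0 ≤ s + k * η := add_nonneg hs.1 (by positivity)
      have h0 : γ' 0 = x := by rw [h2 ⟨le_rfl, hs.1⟩]; exact hγ0
      obtain ⟨γ₂, h3, h4⟩ := hex _ (hx _ γ' (sol_of_mv hF hp h1) h0 _ ⟨hp, le_rfl⟩)
      obtain ⟨γ₃, h5, h6, -⟩ := mv_concat hp hη.le h1 h3 h4
      refine ⟨γ₃, ?_, fun t ht => ?_⟩
      · have : s + ((k + 1 : ℕ) : ℝ) * η = s + k * η + η := by push_cast; ring
        rwa [this]
      · have : 0 ≤ k * η := by positivity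
        rw [h6 t (by linarith [ht.2]), h2 ht]
  obtain ⟨k, hk⟩ := exists_nat_ge (T / η)
  obtain ⟨γ', h1, h2⟩ := key k
  rw [div_le_iff₀ hη] at hk
  exact ⟨γ', sol_of_mv hF hT.le (mv_mono h1 (by linarith [hs.1])), h2⟩

theorem basin_open {F : X m → Set (X m)} (hF : Standing F) {𝒜 : Set (X m)} (h𝒜 : IsAttractor F 𝒜)
    (hne : 𝒜.Nonempty) {V : X m → ℝ} (hVc : ContinuousOn V (basin F 𝒜))
    (hru : RadiallyUnbounded (basin F 𝒜) V)
    (hmono : ∀ T ≥ 0, ∀ γ : ℝ → X m, IsSolOn F γ (Icc 0 T) → γ 0 ∈ basin F 𝒜 →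
      V (γ T) ≤ V (γ 0)) : IsOpen (basin F 𝒜) := by
  obtain ⟨hA, U, hU, hω⟩ := h𝒜
  obtain ⟨r, hr, hrU⟩ := hA.exists_cthickening_subset_open isOpen_interior hU
  have hrU' := hrU.trans interior_subset
  rw [Metric.isOpen_iff]
  intro x hx
  obtain ⟨T₁, hT₁⟩ := hx.2 r hr
  have hK := sublevel_compact hVc hru (V x)
  obtain ⟨δ, hδ, H⟩ := tube2 hF hA hne hω hr hrU' hK ⟨hx, le_rfl⟩
    (fun T hT γ hγ h0 => ⟨basin_inv hF hγ (by rwa [h0]) ⟨hT, le_rfl⟩, by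
      have := hmono T hT γ hγ (by rwa [h0])
      rwa [h0] at this⟩)
    (le_max_right T₁ 0) (fun t ht => hT₁ t ((le_max_left _ _).trans ht))
  set T₀ := max T₁ 0 with hT₀d
  have hT₀ : 0 ≤ T₀ := le_max_right _ _
  refine ⟨δ, hδ, fun x' hx' => ⟨?_, ?_⟩⟩
  · exact extend_sol hF (hK.cthickening.union hA.cthickening)
      fun s γ hγ hγ0 t ht => (H x' hx' s γ hγ hγ0 t ht).1
  · by_contra! hcon
    obtain ⟨ε, hε, hcon⟩ := hcon
    choose t ht y hy hyε using fun n : ℕ => hcon (T₀ + n)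
    choose γ hγ hγ0 hγt using fun n => mem_reachSet_single.1 (hy n)
    have htT : ∀ n, T₀ ≤ t n := fun n => by
      have := ht n; have := (Nat.cast_nonneg n : (0:ℝ) ≤ n); linarith
    have hyr : ∀ n, y n ∈ cthickening r 𝒜 := fun n => by
      rw [← hγt n]
      exact (H x' hx' _ (γ n) (hγ n) (hγ0 n) _ ⟨hT₀.trans (htT n), le_rfl⟩).2 (htT n)
    obtain ⟨z, -, f, hf, hlim⟩ := hA.cthickening.tendsto_subseq hyr
    have hz : ε ≤ infDist z 𝒜 :=
      ge_of_tendsto' (((continuous_infDist_pt 𝒜).tendsto _).comp hlim) fun n => hyε _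
    have hzω : z ∈ omegaLim F U := by
      refine ⟨fun n => t (f n) - T₀, fun n => y (f n), ?_, ?_, hlim⟩
      · have h1 : Tendsto (fun n => ((f n : ℕ) : ℝ)) atTop atTop :=
          tendsto_natCast_atTop_atTop.comp hf.tendsto_atTop
        refine tendsto_atTop_mono (fun n => ?_) h1
        have := ht (f n); linarith
      · intro n
        refine mem_iUnion₂.2 ⟨γ (f n) T₀, hrU' ?_, ?_⟩
        · exact (H x' hx' _ (γ (f n)) (hγ _) (hγ0 _) T₀ ⟨hT₀, htT _⟩).2 le_rfl
        · refine ⟨fun u => γ (f n) (T₀ + u), ?_, by simp, by simp [hγt]⟩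
          exact sol_of_mv hF (by linarith [htT (f n)]) (mv_shift (mv_of_sol (hγ _)) hT₀)
    rw [hω] at hzω
    rw [infDist_zero_of_mem hzω] at hz
    linarith

theorem basin_empty {F : X m → Set (X m)} (hF : Standing F) {𝒜 : Set (X m)} {l : ℕ}
    {M : ℕ → Set (X m)} {V : X m → ℝ} (hML : IsMLFunction F 𝒜 l M V)
    (hD : (⋃ k ∈ Icc 1 l, M k) = ∅) (hru : RadiallyUnbounded (basin F 𝒜) V) :
    basin F 𝒜 = ∅ := by
  by_contra hne
  obtain ⟨x₀, hx₀⟩ := nonempty_iff_ne_empty.2 hne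
  have hK := sublevel_compact hML.1 hru (V x₀)
  obtain ⟨x, hx, hmin⟩ := hK.exists_isMinOn ⟨x₀, hx₀, le_rfl⟩ (hML.1.mono (sep_subset _ _))
  obtain ⟨γ, hγ, he⟩ := hx.1.1 1 one_pos 0 ⟨le_rfl, zero_le_one⟩ (fun _ => x) 
    (sol_of_mv hF le_rfl ⟨continuousOn_const, fun s t h1 h2 h3 => by linarith⟩) rfl
  have h0 : γ 0 = x := he ⟨le_rfl, le_rfl⟩
  have hb : ∀ t ∈ Icc (0:ℝ) 1, γ t ∈ basin F 𝒜 := fun t ht =>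
    basin_inv hF hγ (by rw [h0]; exact hx.1) ht
  have := hML.2.2 0 1 γ hγ (fun t ht => by rw [hD, sdiff_empty]; exact hb t ht)
    ⟨le_rfl, zero_le_one⟩ ⟨zero_le_one, le_rfl⟩ one_pos
  simp only [h0] at this
  have h1 := hmin ⟨hb 1 ⟨zero_le_one, le_rfl⟩, this.le.trans hx.2⟩
  have h1 : V x ≤ V (γ 1) := h1
  linarith

/-- clamp to `[0,1]` -/
def cl (σ : ℝ) : ℝ := max 0 (min 1 σ)

theorem cl_cont : Continuous cl := by unfold cl; fun_prop
theorem cl_mem (σ : ℝ) : cl σ ∈ Icc (0:ℝ) 1 :=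
  ⟨le_max_left _ _, max_le zero_le_one (min_le_left _ _)⟩
theorem cl_id {σ : ℝ} (h : σ ∈ Icc (0:ℝ) 1) : cl σ = σ := by
  unfold cl; rw [min_eq_right h.2, max_eq_right h.1]
theorem cl_nonpos {σ : ℝ} (h : σ ≤ 0) : cl σ = 0 := by
  unfold cl; exact max_eq_left ((min_le_right _ _).trans h)
theorem cl_ge {σ : ℝ} (h : 1 ≤ σ) : cl σ = 1 := by
  unfold cl; rw [min_eq_left h]; simp

/-- From a one-step push-down map to a strong deformation retraction. -/
theorem sdr_of_step {Ω : Set (X m)} {V : X m → ℝ} (hVc : ContinuousOn V Ω) (b : ℝ)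
    (d : Ω → X m) (hd : Continuous d) (hd0 : ∀ x : Ω, V x ≤ b → d x = 0)
    (hdΩ : ∀ x : Ω, ∀ σ ∈ Icc (0:ℝ) 1, (x : X m) - σ • d x ∈ Ω)
    (hdec : ∀ R, ∃ δ > 0, ∀ x : Ω, V x ≤ R → V (x - d x) ≤ max b (V x - δ)) :
    IsSDR {x ∈ Ω | V x ≤ b} Ω := by
  have hVY : Continuous (fun x : Ω => V x) := continuousOn_iff_continuous_domRestrict.1 hVc
  let G : ℝ → Ω → Ω := fun σ x => ⟨x - cl σ • d x, hdΩ x _ (cl_mem σ)⟩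
  have hG : Continuous (fun p : ℝ × Ω => G p.1 p.2) := by
    refine Continuous.subtype_mk ?_ _
    have := cl_cont.comp (continuous_fst (X := ℝ) (Y := Ω))
    have h2 := hd.comp (continuous_snd (X := ℝ) (Y := Ω))
    exact (continuous_subtype_val.comp continuous_snd).sub (this.smul h2)
  have hGb : ∀ (σ : ℝ) (x : Ω), V (x : X m) ≤ b → G σ x = x := fun σ x hx => by
    apply Subtype.ext; simp [G, hd0 x hx]
  have hG0 : ∀ (σ : ℝ) (x : Ω), σ ≤ 0 → G σ x = x := fun σ x hx => by
    apply Subtype.ext; simp [G, cl_nonpos hx]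
  let Q : ℕ → ℝ → Ω → Ω := fun n t x => Nat.rec x (fun k y => G (t - k) y) n
  have hQ0 : ∀ t x, Q 0 t x = x := fun _ _ => rfl
  have hQs : ∀ n t x, Q (n+1) t x = G (t - n) (Q n t x) := fun _ _ _ => rfl
  have hQc : ∀ n, Continuous (fun p : ℝ × Ω => Q n p.1 p.2) := by
    intro n
    induction n with
    | zero => exact continuous_snd
    | succ n ih =>
      exact hG.comp (((continuous_fst.sub continuous_const) : 
        Continuous fun p : ℝ × Ω => p.1 - (n:ℝ)).prodMk ih)
  have hQst : ∀ (t : ℝ) (x : Ω) (n : ℕ), t ≤ (n:ℝ) → ∀ k, Q (n + k) t x = Q n t x := by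
    intro t x n hn k
    induction k with
    | zero => rfl
    | succ k ih =>
      rw [← add_assoc, hQs, hG0 _ _ ?_, ih]
      push_cast
      have := (Nat.cast_nonneg k : (0:ℝ) ≤ k)
      linarith
  have hQb : ∀ (t : ℝ) (x : Ω) (n : ℕ), V (Q n t x).1 ≤ b → ∀ k, Q (n + k) t x = Q n t x := by
    intro t x n hn k
    induction k with
    | zero => rfl
    | succ k ih => rw [← add_assoc, hQs, ih, hGb _ _ hn]
  let P : ℝ → Ω → Ω := fun t x => Q ⌈t⌉₊ t x
  have hPQ : ∀ (t : ℝ) (x : Ω) (n : ℕ), t ≤ (n:ℝ) → P t x = Q n t x := by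
    intro t x n hn
    obtain ⟨k, rfl⟩ := Nat.exists_eq_add_of_le (Nat.ceil_le.2 hn)
    exact (hQst t x _ (Nat.le_ceil t) k).symm
  have hPc : Continuous (fun p : ℝ × Ω => P p.1 p.2) := by
    rw [continuous_iff_continuousAt]
    rintro ⟨t₀, x₀⟩
    refine (hQc (⌈t₀⌉₊ + 1)).continuousAt.congr ?_
    have : ∀ᶠ p : ℝ × Ω in 𝓝 (t₀, x₀), p.1 < ((⌈t₀⌉₊ + 1 : ℕ) : ℝ) := by
      refine (continuous_fst.tendsto (t₀, x₀)).eventually_lt_const ?_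
      push_cast
      have := Nat.le_ceil t₀
      linarith
    filter_upwards [this] with p hp
    exact (hPQ _ _ _ hp.le).symm
  have hP0 : ∀ x : Ω, P 0 x = x := fun x => by rw [hPQ 0 x 0 (by simp), hQ0]
  have hPb : ∀ (t : ℝ) (x : Ω), V (x : X m) ≤ b → P t x = x := fun t x hx => by
    have := hQb t x 0 hx ⌈t⌉₊
    rw [zero_add] at this
    exact this
  have hdesc : ∀ R, ∃ N : ℕ, ∀ x : Ω, V x ≤ R → ∀ t : ℝ, N ≤ t → V (P t x).1 ≤ b := by
    intro R
    obtain ⟨δ, hδ, h⟩ := hdec (max b R)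
    obtain ⟨N, hN⟩ := exists_nat_ge ((R - b) / δ)
    rw [div_le_iff₀ hδ] at hN
    refine ⟨N, fun x hx t ht => ?_⟩
    have key : ∀ n : ℕ, (n:ℝ) ≤ t → V (Q n t x).1 ≤ max b (R - n * δ) := by
      intro n
      induction n with
      | zero => intro _; rw [hQ0]; simp [hx]
      | succ n ih =>
        intro hn
        push_cast at hn ⊢
        have ih' := ih (by linarith)
        have hnδ : 0 ≤ n * δ := by positivity
        have h1 : V (Q n t x).1 ≤ max b R := ih'.trans (max_le_max le_rfl (by linarith))
        have h2 := h _ h1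
        have h3 : (Q (n+1) t x).1 = (Q n t x).1 - d (Q n t x) := by
          rw [hQs]
          simp only [G]
          rw [cl_ge (by linarith), one_smul]
        rw [h3]
        refine h2.trans (max_le (le_max_left _ _) ?_)
        rcases max_cases b (R - n * δ) with ⟨h4, h5⟩ | ⟨h4, h5⟩
        · rw [h4] at ih'
          exact le_max_of_le_left (by linarith)
        · rw [h4] at ih'
          exact le_max_of_le_right (by linarith)
    have hb := key N ht
    rw [max_eq_left (by linarith)] at hb
    have hNt : N ≤ ⌈t⌉₊ := by exact_mod_cast ht.trans (Nat.le_ceil t)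
    obtain ⟨k, hk⟩ := Nat.exists_eq_add_of_le hNt
    have : P t x = Q N t x := by
      show Q ⌈t⌉₊ t x = _
      rw [hk]; exact hQb t x N hb k
    rw [this]; exact hb
  obtain ⟨ρ, hρ⟩ := exists_continuous_forall_mem_convex_of_local_const
    (t := fun x : Ω => {c : ℝ | ∀ t ≥ c, V (P t x).1 ≤ b}) (by
      intro x c₁ h₁ c₂ h₂ a₁ a₂ ha₁ ha₂ hs t ht
      rcases le_total c₁ c₂ with h | h
      · refine h₁ t (le_trans ?_ ht)
        simp only [smul_eq_mul]
        have : c₁ = a₁ * c₁ + a₂ * c₁ := by rw [← add_mul, hs, one_mul]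
        nlinarith
      · refine h₂ t (le_trans ?_ ht)
        simp only [smul_eq_mul]
        have : c₂ = a₁ * c₂ + a₂ * c₂ := by rw [← add_mul, hs, one_mul]
        nlinarith) (by
      intro x
      obtain ⟨N, hN⟩ := hdesc (V x + 1)
      refine ⟨N, ?_⟩
      filter_upwards [(hVY.tendsto x).eventually_lt_const (by linarith : V x < V x + 1)] with y hy
      exact fun t ht => hN y hy.le t ht)
  classical
  refine ⟨sep_subset _ _, fun p => if h : p.2 ∈ Ω then (P (p.1 * ρ ⟨p.2, h⟩) ⟨p.2, h⟩).1 else p.2,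
    ?_, ?_, ?_, ?_, ?_⟩
  · rw [continuousOn_iff_continuous_domRestrict]
    have hj : Continuous (fun p : ↥(Icc (0:ℝ) 1 ×ˢ Ω) => (⟨(p : ℝ × X m).2, p.2.2⟩ : Ω)) :=
      Continuous.subtype_mk (continuous_snd.comp continuous_subtype_val) _
    have hc := continuous_subtype_val.comp (hPc.comp
      (((continuous_fst.comp (continuous_subtype_val (p := (· ∈ Icc (0:ℝ) 1 ×ˢ Ω)))).mul
        (ρ.continuous.comp hj)).prodMk hj))
    refine hc.congr fun p => ?_
    have : (p : ℝ × X m).2 ∈ Ω := p.2.2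
    simp [this]
  · intro σ _ y hy
    simp only [hy, dite_true]
    exact Subtype.coe_prop _
  · intro y hy
    simp [hy, hP0]
  · intro y hy
    simp only [hy, dite_true, one_mul]
    exact ⟨Subtype.coe_prop _, hρ ⟨y, hy⟩ _ le_rfl⟩
  · intro σ _ a ha
    simp only [ha.1, dite_true]
    rw [hPb _ _ ha.2]

/-- Construction of the one-step push-down map from the gradient of `V`. -/
theorem exists_step {Ω : Set (X m)} (hΩ : IsOpen Ω) {V : X m → ℝ}
    (hV : ContDiffOn ℝ (⊤ : ℕ∞) V Ω) (b : ℝ)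
    (hcpt : ∀ R, IsCompact {x ∈ Ω | V x ≤ R})
    (hreg : ∀ x ∈ Ω, b ≤ V x → fderiv ℝ V x ≠ 0) :
    IsSDR {x ∈ Ω | V x ≤ b} Ω := by
  have hVc : ContinuousOn V Ω := hV.continuousOn
  have hVY : Continuous (fun x : Ω => V x) := continuousOn_iff_continuous_domRestrict.1 hVc
  have hfd : ContinuousOn (fun x => fderiv ℝ V x) Ω :=
    hV.continuousOn_fderiv_of_isOpen hΩ (by norm_num)
  let g : X m → X m := fun x => (InnerProductSpace.toDual ℝ (X m)).symm (fderiv ℝ V x)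
  have hg : ContinuousOn g Ω :=
    (InnerProductSpace.toDual ℝ (X m)).symm.continuous.comp_continuousOn hfd
  have hgg : ∀ x, fderiv ℝ V x (g x) = ‖g x‖ ^ 2 := fun x => by
    have h := InnerProductSpace.toDual_symm_apply (𝕜 := ℝ) (x := g x) (y := fderiv ℝ V x)
    rw [← h, ← real_inner_self_eq_norm_sq]
  have hgY : Continuous (fun x : Ω => g x) := continuousOn_iff_continuous_domRestrict.1 hg
  have hgpos : ∀ x ∈ Ω, b ≤ V x → 0 < ‖g x‖ := fun x hx hbx => by
    rw [norm_pos_iff]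
    intro h
    exact hreg x hx hbx ((LinearIsometryEquiv.map_eq_zero_iff _).1 h)
  have hder : ∀ x ∈ Ω, HasFDerivAt V (fderiv ℝ V x) x := fun x hx =>
    ((hV.contDiffAt (hΩ.mem_nhds hx)).differentiableAt (by norm_num)).hasFDerivAt
  obtain ⟨ψ, hψ⟩ := exists_continuous_forall_mem_convex_of_local_const
    (t := fun x : Ω => {c : ℝ | 0 < c ∧ (b ≤ V x → ∀ s ∈ Icc 0 c, (x : X m) - s • g x ∈ Ω ∧
      V (x - s • g x) ≤ V x - s * (‖g x‖ ^ 2 / 2))}) (by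
      intro x
      refine Set.OrdConnected.convex ⟨?_⟩
      intro c₁ h₁ c₂ h₂ c hc
      exact ⟨h₁.1.trans_le hc.1, fun hb s hs => h₂.2 hb s ⟨hs.1, hs.2.trans hc.2⟩⟩) (by
      intro x
      by_cases hbx : b ≤ V x
      · have hx := x.2
        have hn := hΩ.mem_nhds hx
        have hfa : ContinuousAt (fun x => fderiv ℝ V x) x := hfd.continuousAt hn
        have hga : ContinuousAt g x := hg.continuousAt hn
        have hjoint : ContinuousAt (fun p : X m × X m =>
            fderiv ℝ V p.1 (g p.2) - ‖g p.2‖ ^ 2 / 2) ((x : X m), (x : X m)) := by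
          have h1 : ContinuousAt (fun p : X m × X m => fderiv ℝ V p.1) ((x : X m), (x : X m)) :=
            ContinuousAt.comp (g := fun x => fderiv ℝ V x) (f := Prod.fst) hfa continuousAt_fst
          have h2 : ContinuousAt (fun p : X m × X m => g p.2) ((x : X m), (x : X m)) :=
            ContinuousAt.comp (g := g) (f := Prod.snd) hga continuousAt_snd
          exact (h1.clm_apply h2).sub ((h2.norm.pow 2).div_const 2)
        have hp : 0 < fderiv ℝ V x (g x) - ‖g x‖ ^ 2 / 2 := by
          rw [hgg]
          have := hgpos x hx hbx
          nlinarith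
        have hev := (hjoint.eventually_const_lt hp)
        have hev2 : ∀ᶠ p : X m × X m in 𝓝 ((x : X m), (x : X m)), p.1 ∈ Ω :=
          continuousAt_fst.eventually_mem hn
        obtain ⟨r, hr, hball⟩ := Metric.eventually_nhds_iff_ball.1 (hev.and hev2)
        have hball' : ∀ z ∈ ball (x : X m) r, ∀ y ∈ ball (x : X m) r,
            0 < fderiv ℝ V z (g y) - ‖g y‖ ^ 2 / 2 ∧ z ∈ Ω := fun z hz y hy =>
          hball (z, y) (by rw [← ball_prod_same]; exact ⟨hz, hy⟩)
        have hN : 0 < ‖g x‖ + 1 := by positivity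
        refine ⟨r / (2 * (‖g x‖ + 1)), ?_⟩
        have e1 : ∀ᶠ y : Ω in 𝓝 x, ‖g y‖ < ‖g x‖ + 1 :=
          (hgY.norm.tendsto x).eventually_lt_const (by linarith)
        have e2 : ∀ᶠ y : Ω in 𝓝 x, (y : X m) ∈ ball (x : X m) (r / 2) :=
          continuous_subtype_val.continuousAt.eventually_mem (ball_mem_nhds _ (by linarith))
        filter_upwards [e1, e2] with y hy1 hy2
        refine ⟨by positivity, fun _ s hs => ?_⟩
        have hyr : (y : X m) ∈ ball (x : X m) r := ball_subset_ball (by linarith) hy2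
        have hin : ∀ τ ∈ Icc 0 s, (y : X m) - τ • g y ∈ ball (x : X m) r := by
          intro τ hτ
          rw [mem_ball, dist_eq_norm] at hy2 ⊢
          have h1 : ‖τ • g (y : X m)‖ ≤ r / 2 := by
            rw [norm_smul, Real.norm_of_nonneg hτ.1]
            calc τ * ‖g y‖ ≤ r / (2 * (‖g x‖ + 1)) * (‖g x‖ + 1) :=
                  mul_le_mul (hτ.2.trans hs.2) hy1.le (norm_nonneg _) (by positivity)
              _ = r / 2 := by field_simp
          calc ‖(y : X m) - τ • g y - x‖ = ‖((y : X m) - x) - τ • g y‖ := by congr 1; abel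
            _ ≤ ‖(y : X m) - x‖ + ‖τ • g (y : X m)‖ := norm_sub_le _ _
            _ < r := by linarith
        refine ⟨(hball' _ (hin s ⟨hs.1, le_rfl⟩) _ hyr).2, ?_⟩
        have hd : ∀ τ ∈ Icc 0 s, HasDerivAt
            (fun τ : ℝ => V (y - τ • g y) + τ * (‖g (y : X m)‖ ^ 2 / 2))
            (fderiv ℝ V (y - τ • g y) (-(g y)) + ‖g (y : X m)‖ ^ 2 / 2) τ := by
          intro τ hτ
          have hA : HasDerivAt (fun τ : ℝ => (y : X m) - τ • g y) (-(g y)) τ := by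
            simpa using ((hasDerivAt_id τ).smul_const (g (y : X m))).const_sub (y : X m)
          have hB := (hder _ (hball' _ (hin τ hτ) _ hyr).2).comp_hasDerivAt τ hA
          have hC := hB.add ((hasDerivAt_id τ).mul_const (‖g (y : X m)‖ ^ 2 / 2))
          rw [one_mul] at hC
          exact hC
        have hanti : AntitoneOn (fun τ : ℝ => V (y - τ • g y) + τ * (‖g (y : X m)‖ ^ 2 / 2))
            (Icc 0 s) := by
          refine antitoneOn_of_deriv_nonpos (convex_Icc _ _)
            (fun τ hτ => (hd τ hτ).continuousAt.continuousWithinAt)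
            (fun τ hτ => (hd τ (interior_subset hτ)).differentiableAt.differentiableWithinAt)
            (fun τ hτ => ?_)
          have hτ' := interior_subset hτ
          rw [(hd τ hτ').deriv, map_neg]
          have := (hball' _ (hin τ hτ') _ hyr).1
          linarith
        have h := hanti (left_mem_Icc.2 hs.1) (right_mem_Icc.2 hs.1) hs.1
        simp only [zero_smul, sub_zero, zero_mul, add_zero] at h
        linarith
      · refine ⟨1, ?_⟩
        push Not at hbx
        filter_upwards [(hVY.tendsto x).eventually_lt_const hbx] with y hy
        exact ⟨one_pos, fun h => absurd h (not_le.2 hy)⟩)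
  let q : Ω → ℝ := fun x => ‖g x‖ ^ 2 / 2 + max 0 (b - V x)
  have hqc : Continuous q :=
    ((hgY.norm.pow 2).div_const 2).add (continuous_const.max (continuous_const.sub hVY))
  have hq : ∀ x, 0 < q x := by
    intro x
    rcases le_or_gt b (V x) with h | h
    · have := hgpos x x.2 h
      have h2 := le_max_left 0 (b - V x)
      simp only [q]
      positivity
    · have : 0 < max 0 (b - V x) := lt_max_of_lt_right (by linarith)
      simp only [q]
      positivity
  have hqe : ∀ x : Ω, b ≤ V x → q x = ‖g x‖ ^ 2 / 2 := fun x h => by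
    simp only [q]; rw [max_eq_left (by linarith), add_zero]
  let θ : Ω → ℝ := fun x => min (ψ x) (max 0 (V x - b) / q x)
  have hθc : Continuous θ :=
    ψ.continuous.min ((continuous_const.max (hVY.sub continuous_const)).div hqc
      (fun x => (hq x).ne'))
  have hθ0 : ∀ x, 0 ≤ θ x := fun x =>
    le_min (hψ x).1.le (div_nonneg (le_max_left _ _) (hq x).le)
  have hd0 : ∀ x : Ω, V x ≤ b → θ x • g x = 0 := fun x hx => by
    have : θ x = 0 := by
      simp only [θ]
      rw [max_eq_left (by linarith), zero_div, min_eq_right (hψ x).1.le]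
    rw [this, zero_smul]
  refine sdr_of_step hVc b (fun x => θ x • g x) (hθc.smul hgY) hd0 ?_ ?_
  · intro x σ hσ
    rcases le_total (V x) b with h | h
    · rw [hd0 x h]; simp
    · rw [smul_smul]
      refine ((hψ x).2 h _ ⟨mul_nonneg hσ.1 (hθ0 x), ?_⟩).1
      calc σ * θ x ≤ 1 * θ x := mul_le_mul_of_nonneg_right hσ.2 (hθ0 x)
        _ = θ x := one_mul _
        _ ≤ ψ x := min_le_left _ _
  · intro R
    have hK : IsCompact {x : Ω | V x ≤ R} := by
      rw [Subtype.isCompact_iff]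
      convert hcpt R using 1
      ext y
      simp only [mem_image, mem_ofPred_eq, Subtype.exists, exists_and_right, exists_eq_right]
      exact ⟨fun ⟨h1, h2⟩ => ⟨h1, h2⟩, fun ⟨h1, h2⟩ => ⟨h1, h2⟩⟩
    obtain ⟨δ, hδ, hmin⟩ : ∃ δ > 0, ∀ x : Ω, V x ≤ R → δ ≤ ψ x * q x := by
      rcases eq_empty_or_nonempty {x : Ω | V x ≤ R} with he | hne
      · exact ⟨1, one_pos, fun x hx => absurd (show x ∈ {x : Ω | V x ≤ R} from hx) (by simp [he])⟩
      · obtain ⟨x₀, _, h⟩ := hK.exists_isMinOn hne (ψ.continuous.mul hqc).continuousOn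
        exact ⟨ψ x₀ * q x₀, mul_pos (hψ x₀).1 (hq x₀), fun x hx => h hx⟩
    refine ⟨δ, hδ, fun x hx => ?_⟩
    rcases le_total (V x) b with h | h
    · simp only [hd0 x h, sub_zero]; exact le_max_of_le_left h
    · have h1 := ((hψ x).2 h (θ x) ⟨hθ0 x, min_le_left _ _⟩).2
      rw [← hqe x h] at h1
      rcases min_choice (ψ x) (max 0 (V x - b) / q x) with h2 | h2
      · refine le_max_of_le_right (h1.trans ?_)
        have h3 : θ x = ψ x := h2
        rw [h3]
        have := hmin x hx
        linarith
      · refine le_max_of_le_left (h1.trans ?_)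
        have h3 : θ x = (V x - b) / q x := by
          rw [max_eq_right (by linarith)] at h2
          have : θ x = min (ψ x) (max 0 (V x - b) / q x) := rfl
          rw [this, max_eq_right (by linarith)]; exact h2
        rw [h3, div_mul_cancel₀ _ (hq x).ne']
        linarith

/-- from the proof of Theorem 5.2: for a radially unbounded
strict smooth Morse–Lyapunov function `V` of a Morse decomposition on the basin
`Ω = Ω(𝒜)`, any sublevel set `V_b` with `V < b` on `𝒜` is a strong deformation
retract of `Ω`. -/
theorem morse_sublevel_is_deformation_retract {m : ℕ} (F : X m → Set (X m))
    (hF : Standing F) (𝒜 : Set (X m)) (h𝒜 : IsAttractor F 𝒜)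
    (l : ℕ) (M : ℕ → Set (X m)) (hMD : IsMorseDecomposition F 𝒜 l M)
    (V w : X m → ℝ)
    (hV : ContDiffOn ℝ (⊤ : ℕ∞) V (basin F 𝒜)) (hru : RadiallyUnbounded (basin F 𝒜) V)
    (hML : IsStrictML F 𝒜 l M V)
    (hwc : ContinuousOn w (basin F 𝒜)) (hwn : ∀ x ∈ basin F 𝒜, 0 ≤ w x)
    (hwD : ∀ x ∈ ⋃ k ∈ Icc 1 l, M k, w x = 0)
    (hwp : ∀ x ∈ basin F 𝒜 \ ⋃ k ∈ Icc 1 l, M k, 0 < w x)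
    (hd : ∀ x ∈ basin F 𝒜, ∀ v ∈ F x, fderiv ℝ V x v ≤ -w x)
    (b : ℝ) (hb : ∀ x ∈ 𝒜, V x < b) :
    IsSDR {x ∈ basin F 𝒜 | V x ≤ b} (basin F 𝒜) := by
  have hMLF := hML.1
  have hDc : IsClosed (⋃ k ∈ Icc 1 l, M k) :=
    (finite_Icc 1 l).isClosed_biUnion fun k hk => (hMD.1 k hk.1 hk.2).1.isClosed
  have hDA : (⋃ k ∈ Icc 1 l, M k) ⊆ 𝒜 := iUnion₂_subset fun k hk => (hMD.1 k hk.1 hk.2).2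
  rcases eq_empty_or_nonempty 𝒜 with he | hne
  · have hD0 : (⋃ k ∈ Icc 1 l, M k) = ∅ := subset_empty_iff.1 (he ▸ hDA)
    have hB := basin_empty hF hMLF hD0 hru
    have hno : ∀ y, y ∉ basin F 𝒜 := fun y hy => by rw [hB] at hy; exact hy
    exact ⟨sep_subset _ _, Prod.snd, continuous_snd.continuousOn,
      fun _ _ y hy => hy, fun _ _ => rfl, fun y hy => absurd hy (hno y), fun _ _ _ _ => rfl⟩
  · have hop : IsOpen (basin F 𝒜) := basin_open hF h𝒜 hne hV.continuousOn hru
      (fun T hT γ hγ h0 => V_mono hF hMLF hDc hT hγ h0)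
    refine exists_step hop hV b (sublevel_compact hV.continuousOn hru) ?_
    intro x hx hbx h0
    have hxD : x ∉ ⋃ k ∈ Icc 1 l, M k := fun h => absurd (hb x (hDA h)) (not_lt.2 hbx)
    have hw := hwp x ⟨hx, hxD⟩
    obtain ⟨v, hv⟩ := (hF.1 x).1
    have h1 := hd x hx v hv
    rw [h0] at h1
    simp only [ContinuousLinearMap.zero_apply] at h1
    linarith

end DI
end
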